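/- arXiv:1802.08439 — 3 statements merged into one kernel-verified Lean document; each statement's English description precedes it below -/
import Mathlib

section
/- Let (X, ℬ, μ, T) be a conservative, measure-preserving transformation of a σ-finite measure space. Let f, g ∈ L¹(X, μ) with g > 0 μ-almost everywhere. Then the limit h := lim_{n→∞} S_n f / S_n g exists μ-almost everywhere, h is finite μ-almost everywhere, h is T-invariant (h∘T = h μ-a.e.), and for every measurable T-invariant set A one has ∫_A f dμ = ∫_A h·g dμ. (Hopf's ratio ergodic theorem.) -/
/-!
Let `ν = g μ`, a finite measure, and let `h = ν[f / g | 𝓘]` be the conditional expectation on the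
σ-algebra `𝓘` of `T`-invariant sets. Then `h` is `T`-invariant, and `∫_A h g dμ = ∫_A f dμ` for
every invariant `A` is the defining property of conditional expectation. It remains to prove that
`S_n f / S_n g → h` almost everywhere. As `h` is invariant, `S_n u = S_n f - h S_n g` for
`u = f - h g`, so this says that `S_n u / S_n g → 0` for an integrable `u` whose integral over
every invariant set vanishes.

Fix `ε > 0` and let `E` be the invariant set where the Birkhoff sums of `u - ε g` are unbounded
above. Hopf's maximal inequality (`maximal_ineq`) on `E` gives `0 ≤ ∫_E (u - ε g) = -ε ∫_E g`, so
`E` is null (`ae_bddAbove_birkhoff`). Conservativity gives `S_n g → ∞` almost everywhere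
(`ae_tendsto_birkhoff_atTop`), by Poincaré recurrence to the sets `{g > 1 / (k + 1)}`. Hence
`limsup S_n u / S_n g ≤ ε`, and the same for `-u`.
-/

open MeasureTheory Filter Topology

/-- `T` is conservative w.r.t. `μ`: every set of positive measure returns to itself. -/
def IsConservative {X : Type*} [MeasurableSpace X] (T : X → X) (μ : Measure X) : Prop :=
  ∀ A : Set X, MeasurableSet A → 0 < μ A → ∃ n ≥ 1, 0 < μ (A ∩ (T^[n]) ⁻¹' A)

/-- Birkhoff sum `S_n f = ∑_{k<n} f ∘ T^k`. -/
noncomputable def birkhoff {X : Type*} (T : X → X) (f : X → ℝ) (n : ℕ) (x : X) : ℝ :=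
  ∑ k ∈ Finset.range n, f (T^[k] x)

/-! ### Birkhoff sums and the maximal inequality -/

lemma birkhoff_succ' {X : Type*} (T : X → X) (f : X → ℝ) (n : ℕ) (x : X) :
    birkhoff T f (n + 1) x = f x + birkhoff T f n (T x) := by
  simp [birkhoff, Finset.sum_range_succ', add_comm]

lemma measurable_birkhoff {X : Type*} [MeasurableSpace X] {T : X → X} (hT : Measurable T)
    {f : X → ℝ} (hf : Measurable f) (n : ℕ) : Measurable (birkhoff T f n) := by
  unfold birkhoff
  exact Finset.measurable_sum _ fun k _ => hf.comp (hT.iterate k)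

/-- The running maximum `max (S_0 φ, …, S_n φ)` of the Birkhoff sums, where `S_0 φ = 0`, encoded
through the recursion `M_{n+1} = max (0, φ + M_n ∘ T)`. -/
noncomputable def runMax {X : Type*} (T : X → X) (φ : X → ℝ) : ℕ → X → ℝ
  | 0 => fun _ => 0
  | n + 1 => fun x => max 0 (φ x + runMax T φ n (T x))

section RunMax

variable {X : Type*} {T : X → X} {φ : X → ℝ}

lemma runMax_nonneg (n : ℕ) (x : X) : 0 ≤ runMax T φ n x := by
  cases n with
  | zero => exact le_rfl
  | succ n => exact le_max_left _ _

lemma runMax_le_succ (n : ℕ) : ∀ x : X, runMax T φ n x ≤ runMax T φ (n + 1) x := by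
  induction n with
  | zero => exact fun x => runMax_nonneg _ _
  | succ n ih => exact fun x => max_le_max le_rfl (add_le_add_right (ih (T x)) (φ x))

lemma birkhoff_le_runMax (n : ℕ) : ∀ x : X, birkhoff T φ n x ≤ runMax T φ n x := by
  induction n with
  | zero => intro x; simp [birkhoff, runMax]
  | succ n ih =>
    intro x
    rw [birkhoff_succ']
    exact (add_le_add_right (ih (T x)) (φ x)).trans (le_max_right _ _)

lemma measurable_runMax [MeasurableSpace X] (hT : Measurable T) (hφ : Measurable φ) (n : ℕ) :
    Measurable (runMax T φ n) := by
  induction n with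
  | zero => exact measurable_const
  | succ n ih => exact measurable_const.max (hφ.add (ih.comp hT))

lemma integrable_runMax [MeasurableSpace X] {μ : Measure X} (hT : MeasurePreserving T μ μ)
    (hφ : Integrable φ μ) (n : ℕ) : Integrable (runMax T φ n) μ := by
  induction n with
  | zero => exact integrable_zero _ _ _
  | succ n ih =>
    exact (integrable_zero _ _ _).sup (hφ.add (hT.integrable_comp_of_integrable ih))

end RunMax

/-- Hopf's maximal inequality, for a transformation almost all of whose points have some
positive Birkhoff sum. It is used for the restriction of `T` to an invariant set. -/
lemma maximal_ineq {X : Type*} [MeasurableSpace X] {μ : Measure X} {T : X → X}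
    (hT : MeasurePreserving T μ μ) {φ : X → ℝ} (hφm : Measurable φ) (hφ : Integrable φ μ)
    (hpos : ∀ᵐ x ∂μ, ∃ n, 0 < birkhoff T φ n x) : 0 ≤ ∫ x, φ x ∂μ := by
  set s : ℕ → Set X := fun n => {x | 0 < runMax T φ n x} with hs
  have hsm : ∀ n, MeasurableSet (s n) := fun n =>
    measurableSet_lt measurable_const (measurable_runMax hT.measurable hφm n)
  have hmono : Monotone s := monotone_nat_of_le_succ fun n x hx =>
    lt_of_lt_of_le hx (runMax_le_succ n x)
  have hint := integrable_runMax hT hφ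
  have hcomp : ∀ n, ∫ x, runMax T φ n (T x) ∂μ = ∫ x, runMax T φ n x ∂μ := fun n => by
    have hm := (measurable_runMax hT.measurable hφm n).aestronglyMeasurable
      (μ := Measure.map T μ)
    rw [← integral_map hT.measurable.aemeasurable hm, hT.map_eq]
  have hstep : ∀ n, 0 ≤ ∫ x in s n, φ x ∂μ := by
    intro n
    cases n with
    | zero => simp [hs, runMax]
    | succ n =>
      rw [← integral_indicator (hsm _)]
      have h1 : ∫ x, (runMax T φ (n + 1) x - runMax T φ n (T x)) ∂μ
          ≤ ∫ x, (s (n + 1)).indicator φ x ∂μ := by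
        refine integral_mono ((hint _).sub (hT.integrable_comp_of_integrable (hint n)))
          (hφ.indicator (hsm _)) fun x => ?_
        by_cases hx : x ∈ s (n + 1)
        · -- A positive maximum `M_{n+1} = max (0, φ + M_n ∘ T)` equals `φ + M_n ∘ T`.
          have hx' : 0 < max 0 (φ x + runMax T φ n (T x)) := hx
          have h2 : runMax T φ (n + 1) x = φ x + runMax T φ n (T x) := by
            rcases lt_max_iff.1 hx' with h | h
            · exact absurd h (lt_irrefl _)
            · exact max_eq_right h.le
          simp [Set.indicator_of_mem hx, h2]
        · have h2 : runMax T φ (n + 1) x ≤ 0 := not_lt.1 hx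
          have h3 := runMax_nonneg (T := T) (φ := φ) n (T x)
          simp only [Set.indicator_of_notMem hx]
          linarith
      have h5 : Integrable (fun x => runMax T φ n (T x)) μ :=
        hT.integrable_comp_of_integrable (hint n)
      rw [integral_sub (hint _) h5, hcomp] at h1
      have h4 := integral_mono (hint n) (hint (n + 1)) (runMax_le_succ n)
      linarith
  have hU : (⋃ n, s n) =ᵐ[μ] Set.univ := by
    rw [eventuallyEq_univ]
    filter_upwards [hpos] with x ⟨n, hn⟩
    exact Set.mem_iUnion.2 ⟨n, hn.trans_le (birkhoff_le_runMax n x)⟩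
  have hlim := tendsto_setIntegral_of_monotone hsm hmono hφ.integrableOn
  rw [setIntegral_congr_set hU, setIntegral_univ] at hlim
  exact ge_of_tendsto' hlim hstep

/-! ### Ratios with zero integral over invariant sets -/

/-- If `u` has zero integral over every invariant set, then almost everywhere the Birkhoff sums
of `u` exceed those of `ε g` by at most a constant depending on the point. -/
lemma ae_bddAbove_birkhoff {X : Type*} [MeasurableSpace X] {μ : Measure X} {T : X → X}
    (hT : MeasurePreserving T μ μ) {u g : X → ℝ} (hum : Measurable u) (hu : Integrable u μ)
    (hgm : Measurable g) (hg : Integrable g μ) (hgpos : ∀ x, 0 < g x)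
    (hu0 : ∀ A, MeasurableSet A → T ⁻¹' A = A → ∫ x in A, u x ∂μ = 0) {ε : ℝ} (hε : 0 < ε) :
    ∀ᵐ x ∂μ, BddAbove (Set.range fun n => birkhoff T (fun y => u y - ε * g y) n x) := by
  set φ : X → ℝ := fun y => u y - ε * g y with hφdef
  have hφm : Measurable φ := hum.sub (hgm.const_mul ε)
  have hφ : Integrable φ μ := hu.sub (hg.const_mul ε)
  set B : Set X := {x | BddAbove (Set.range fun n => birkhoff T φ n x)} with hB
  have hBm : MeasurableSet B :=
    measurableSet_bddAbove_range fun n => measurable_birkhoff hT.measurable hφm n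
  have hBinv : T ⁻¹' B = B := by
    ext x
    simp only [hB, Set.mem_preimage, Set.mem_ofPred_eq, bddAbove_def, Set.forall_mem_range]
    constructor
    · rintro ⟨C, hC⟩
      refine ⟨max 0 (φ x + C), fun n => ?_⟩
      cases n with
      | zero => simp [birkhoff]
      | succ n =>
        rw [birkhoff_succ']
        exact (add_le_add_right (hC n) (φ x)).trans (le_max_right _ _)
    · rintro ⟨C, hC⟩
      refine ⟨C - φ x, fun n => ?_⟩
      have := hC (n + 1)
      rw [birkhoff_succ'] at this
      linarith
  have hEinv : T ⁻¹' Bᶜ = Bᶜ := by rw [Set.preimage_compl, hBinv]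
  have hTE : MeasurePreserving T (μ.restrict Bᶜ) (μ.restrict Bᶜ) := by
    have := hT.restrict_preimage hBm.compl
    rwa [hEinv] at this
  have hmax : 0 ≤ ∫ x in Bᶜ, φ x ∂μ := by
    refine maximal_ineq hTE hφm hφ.integrableOn ?_
    filter_upwards [ae_restrict_mem hBm.compl] with x hx
    by_contra! hcon
    exact hx ⟨0, by rintro _ ⟨n, rfl⟩; exact hcon n⟩
  have heq : ∫ x in Bᶜ, φ x ∂μ = - (ε * ∫ x in Bᶜ, g x ∂μ) := by
    simp only [hφdef]
    rw [integral_sub hu.integrableOn (hg.const_mul ε).integrableOn,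
      hu0 _ hBm.compl hEinv, integral_const_mul, zero_sub]
  have hg0 : ∫ x in Bᶜ, g x ∂μ = 0 := by
    have h1 : 0 ≤ ∫ x in Bᶜ, g x ∂μ := integral_nonneg fun x => (hgpos x).le
    nlinarith
  have hz := (integral_eq_zero_iff_of_nonneg (fun x => (hgpos x).le) hg.integrableOn).1 hg0
  have hnull : μ.restrict Bᶜ = 0 := by
    rw [← ae_eq_bot, ← eventually_false_iff_eq_bot]
    filter_upwards [hz] with x hx
    exact (hgpos x).ne' hx
  rw [Measure.restrict_eq_zero] at hnull
  exact hnull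

lemma ae_tendsto_birkhoff_atTop {X : Type*} [MeasurableSpace X] {μ : Measure X} {T : X → X}
    (hT : Conservative T μ) {g : X → ℝ} (hgm : Measurable g) (hgpos : ∀ x, 0 < g x) :
    ∀ᵐ x ∂μ, Tendsto (fun n => birkhoff T g n x) atTop atTop := by
  have h1 : ∀ k : ℕ, ∀ᵐ x ∂μ, x ∈ {y | 1 / ((k : ℝ) + 1) < g y} →
      ∃ᶠ n in atTop, T^[n] x ∈ {y | 1 / ((k : ℝ) + 1) < g y} := fun k =>
    hT.ae_mem_imp_frequently_image_mem
      (measurableSet_lt measurable_const hgm).nullMeasurableSet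
  filter_upwards [ae_all_iff.2 h1] with x hx
  obtain ⟨k, hk⟩ := exists_nat_one_div_lt (hgpos x)
  refine (not_summable_iff_tendsto_nat_atTop_of_nonneg fun n => (hgpos _).le).1 fun hsum => ?_
  have hlt := hsum.tendsto_atTop_zero.eventually_lt_const
    (show (0 : ℝ) < 1 / ((k : ℝ) + 1) by positivity)
  obtain ⟨n, hn1, hn2⟩ := ((hx k hk).and_eventually hlt).exists
  exact lt_asymm hn1 hn2

lemma ae_tendsto_ratio_zero {X : Type*} [MeasurableSpace X] {μ : Measure X} {T : X → X}
    (hT : MeasurePreserving T μ μ) (hc : Conservative T μ)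
    {u g : X → ℝ} (hum : Measurable u) (hu : Integrable u μ)
    (hgm : Measurable g) (hg : Integrable g μ) (hgpos : ∀ x, 0 < g x)
    (hu0 : ∀ A, MeasurableSet A → T ⁻¹' A = A → ∫ x in A, u x ∂μ = 0) :
    ∀ᵐ x ∂μ, Tendsto (fun n => birkhoff T u n x / birkhoff T g n x) atTop (𝓝 0) := by
  have hpos : ∀ k : ℕ, (0 : ℝ) < 1 / ((k : ℝ) + 1) := fun k => by positivity
  have h1 := ae_all_iff.2 fun k : ℕ => ae_bddAbove_birkhoff hT hum hu hgm hg hgpos hu0 (hpos k)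
  have h2 := ae_all_iff.2 fun k : ℕ => ae_bddAbove_birkhoff hT hum.neg hu.neg hgm hg hgpos
    (fun A hA hAi => by simp [integral_neg, hu0 A hA hAi]) (hpos k)
  filter_upwards [h1, h2, ae_tendsto_birkhoff_atTop hc hgm hgpos] with x hx1 hx2 hx3
  rw [Metric.tendsto_nhds]
  intro ε hε
  obtain ⟨k, hk⟩ := exists_nat_one_div_lt hε
  obtain ⟨C, hC⟩ := hx1 k
  obtain ⟨D, hD⟩ := hx2 k
  set δ : ℝ := 1 / ((k : ℝ) + 1)
  have hsplit : ∀ (v : X → ℝ) n, birkhoff T (fun y => v y - δ * g y) n x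
      = birkhoff T v n x - δ * birkhoff T g n x := fun v n => by
    simp [birkhoff, Finset.sum_sub_distrib, Finset.mul_sum]
  have hneg : ∀ n, birkhoff T (-u) n x = - birkhoff T u n x := fun n => by
    simp [birkhoff]
  filter_upwards [hx3.eventually_gt_atTop 0, hx3.eventually_gt_atTop (C / (ε - δ)),
    hx3.eventually_gt_atTop (D / (ε - δ))] with n hn0 hnC hnD
  have hC' := hC ⟨n, rfl⟩
  have hD' := hD ⟨n, rfl⟩
  simp only [hsplit u] at hC'
  have hD'' : birkhoff T (-u) n x - δ * birkhoff T g n x ≤ D := by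
    rw [← hsplit]; exact hD'
  rw [hneg] at hD''
  rw [div_lt_iff₀ (sub_pos.2 hk)] at hnC hnD
  rw [Real.dist_eq, sub_zero, abs_div, abs_of_pos hn0, div_lt_iff₀ hn0, abs_lt]
  constructor <;> nlinarith

/-! ### Identification of the limit -/

lemma IsConservative.conservative {X : Type*} [MeasurableSpace X] {μ : Measure X} {T : X → X}
    (h : IsConservative T μ) (hT : MeasurePreserving T μ μ) : Conservative T μ where
  toQuasiMeasurePreserving := hT.quasiMeasurePreserving
  exists_mem_iterate_mem' := fun s hs h0 => by
    obtain ⟨n, hn, hpos⟩ := h s hs (pos_iff_ne_zero.2 h0)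
    obtain ⟨x, hx, hx'⟩ := nonempty_of_measure_ne_zero hpos.ne'
    exact ⟨x, hx, n, by omega, hx'⟩

/-- Hopf's theorem for a measurable numerator and a measurable, everywhere positive denominator. -/
lemma hopf_of_measurable {X : Type*} [MeasurableSpace X] {μ : Measure X}
    {T : X → X} (hT : MeasurePreserving T μ μ) (hc : Conservative T μ)
    {f g : X → ℝ} (hfm : Measurable f) (hf : Integrable f μ) (hgm : Measurable g)
    (hg : Integrable g μ) (hgpos : ∀ x, 0 < g x) :
    ∃ h : X → ℝ,
      (∀ᵐ x ∂μ, Tendsto (fun n => birkhoff T f n x / birkhoff T g n x) atTop (𝓝 (h x))) ∧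
      (∀ x, h (T x) = h x) ∧
      ∀ A : Set X, MeasurableSet A → T ⁻¹' A = A →
        ∫ x in A, f x ∂μ = ∫ x in A, h x * g x ∂μ := by
  have hdm : Measurable fun x => ENNReal.ofReal (g x) := hgm.ennreal_ofReal
  have htoReal : ∀ x, (ENNReal.ofReal (g x)).toReal = g x := fun x =>
    ENNReal.toReal_ofReal (hgpos x).le
  set ν : Measure X := μ.withDensity fun x => ENNReal.ofReal (g x) with hν
  have : IsFiniteMeasure ν := isFiniteMeasure_withDensity_ofReal hg.2
  have hle := MeasurableSpace.invariants_le T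
  set q : X → ℝ := fun x => f x / g x with hq
  have hqg : ∀ x, q x * g x = f x := fun x => div_mul_cancel₀ _ (hgpos x).ne'
  have hlt : ∀ s : Set X, ∀ᵐ x ∂μ.restrict s, ENNReal.ofReal (g x) < ⊤ := fun s =>
    Eventually.of_forall fun x => ENNReal.ofReal_lt_top
  have hqint : Integrable q ν := by
    rw [hν, integrable_withDensity_iff hdm (Eventually.of_forall fun x => ENNReal.ofReal_lt_top)]
    simpa only [htoReal, hqg] using hf
  set h : X → ℝ := ν[q | MeasurableSpace.invariants T] with hh
  have hhI : Measurable[MeasurableSpace.invariants T] h := stronglyMeasurable_condExp.measurable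
  have hhm : Measurable h := hhI.mono hle le_rfl
  have hinv : ∀ x, h (T x) = h x := fun x =>
    congrFun (MeasurableSpace.comp_eq_of_measurable_invariants hhI) x
  have hhg : Integrable (fun x => h x * g x) μ := by
    have h1 : Integrable h ν := integrable_condExp
    rw [hν, integrable_withDensity_iff hdm
      (Eventually.of_forall fun x => ENNReal.ofReal_lt_top)] at h1
    simpa only [htoReal] using h1
  have hset : ∀ A : Set X, MeasurableSet A → T ⁻¹' A = A →
      ∫ x in A, f x ∂μ = ∫ x in A, h x * g x ∂μ := by
    intro A hA hAi
    have h1 : ∫ x in A, h x ∂ν = ∫ x in A, q x ∂ν :=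
      setIntegral_condExp hle hqint (MeasurableSpace.measurableSet_invariants.2 ⟨hA, hAi⟩)
    rw [hν, setIntegral_withDensity_eq_setIntegral_toReal_smul hdm (hlt A) _ hA,
      setIntegral_withDensity_eq_setIntegral_toReal_smul hdm (hlt A) _ hA] at h1
    simp only [htoReal, smul_eq_mul, mul_comm (g _), hqg] at h1
    exact h1.symm
  refine ⟨h, ?_, hinv, hset⟩
  have hu0 : ∀ A, MeasurableSet A → T ⁻¹' A = A → ∫ x in A, (f x - h x * g x) ∂μ = 0 := by
    intro A hA hAi
    rw [integral_sub hf.integrableOn hhg.integrableOn, hset A hA hAi, sub_self]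
  filter_upwards [ae_tendsto_ratio_zero hT hc (hfm.sub (hhm.mul hgm)) (hf.sub hhg) hgm hg hgpos hu0,
    ae_tendsto_birkhoff_atTop hc hgm hgpos] with x hx hx'
  have hiter : ∀ k, h (T^[k] x) = h x := fun k => by
    induction k with
    | zero => rfl
    | succ k ih => rw [Function.iterate_succ_apply', hinv, ih]
  have hx2 := hx.add_const (h x)
  rw [zero_add] at hx2
  refine hx2.congr' ?_
  filter_upwards [hx'.eventually_gt_atTop 0] with n hn
  have h1 : birkhoff T (fun y => f y - h y * g y) n x
      = birkhoff T f n x - h x * birkhoff T g n x := by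
    simp [birkhoff, Finset.sum_sub_distrib, Finset.mul_sum, hiter]
  change birkhoff T (fun y => f y - h y * g y) n x / _ + _ = _
  rw [h1]
  field_simp
  ring

lemma ae_birkhoff_congr {X : Type*} [MeasurableSpace X] {μ : Measure X} {T : X → X}
    (hT : MeasurePreserving T μ μ) {f f' : X → ℝ} (h : f =ᵐ[μ] f') :
    ∀ᵐ x ∂μ, ∀ n, birkhoff T f n x = birkhoff T f' n x := by
  have h1 : ∀ᵐ x ∂μ, ∀ k : ℕ, f (T^[k] x) = f' (T^[k] x) :=
    ae_all_iff.2 fun k => (hT.iterate k).quasiMeasurePreserving.ae h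
  filter_upwards [h1] with x hx n
  simp [birkhoff, hx]

/-- Hopf's ratio ergodic theorem. -/
theorem hopf_ratio_ergodic {X : Type*} [MeasurableSpace X] (μ : Measure X) [SigmaFinite μ]
    (T : X → X) (hT : MeasurePreserving T μ μ) (hcons : IsConservative T μ)
    (f g : X → ℝ) (hf : Integrable f μ) (hg : Integrable g μ)
    (hgpos : ∀ᵐ x ∂μ, 0 < g x) :
    ∃ h : X → ℝ,
      (∀ᵐ x ∂μ, Tendsto (fun n => birkhoff T f n x / birkhoff T g n x) atTop (𝓝 (h x))) ∧
      (∀ᵐ x ∂μ, h (T x) = h x) ∧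
      ∀ A : Set X, MeasurableSet A → T ⁻¹' A = A →
        ∫ x in A, f x ∂μ = ∫ x in A, h x * g x ∂μ := by
  set f' : X → ℝ := hf.1.mk f
  have hff' : f =ᵐ[μ] f' := hf.1.ae_eq_mk
  have hfm : Measurable f' := hf.1.stronglyMeasurable_mk.measurable
  set g₁ : X → ℝ := hg.1.mk g
  have hg₁m : Measurable g₁ := hg.1.stronglyMeasurable_mk.measurable
  -- Make the denominator positive everywhere; this changes it only on a null set.
  set g' : X → ℝ := fun x => if 0 < g₁ x then g₁ x else 1 with hg'
  have hgm : Measurable g' :=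
    Measurable.ite (measurableSet_lt measurable_const hg₁m) hg₁m measurable_const
  have hgg' : g =ᵐ[μ] g' := by
    filter_upwards [hg.1.ae_eq_mk, hgpos] with x hx hpos
    rw [hx] at hpos
    simp only [hg', g₁, if_pos hpos, hx]
  have hg'pos : ∀ x, 0 < g' x := fun x => by
    simp only [hg']
    split_ifs with hx
    · exact hx
    · exact one_pos
  obtain ⟨h, h1, h2, h3⟩ := hopf_of_measurable hT (hcons.conservative hT) hfm (hf.congr hff') hgm
    (hg.congr hgg') hg'pos
  refine ⟨h, ?_, Eventually.of_forall h2, fun A hA hAi => ?_⟩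
  · filter_upwards [h1, ae_birkhoff_congr hT hff', ae_birkhoff_congr hT hgg'] with x hx hxf hxg
    simpa only [hxf, hxg] using hx
  · rw [integral_congr_ae (ae_restrict_of_ae hff'), h3 A hA hAi]
    refine integral_congr_ae (ae_restrict_of_ae ?_)
    filter_upwards [hgg'] with x hx
    rw [hx]
end

section
/- Let (X, ℬ, μ, T) be a conservative, measure-preserving transformation of a σ-finite measure space. Let (a_n)_{n≥1} be a sequence of measurable functions with values in [−∞,+∞] that is subadditive with respect to T (i.e. a_{n+m} ≤ a_n + a_m∘Tⁿ μ-a.e. for all n, m ≥ 1), with positive part (a_1)⁺ ∈ L¹(X, μ). Let g ∈ L¹(X, μ) with g > 0 μ-almost everywhere. Then the limit h := lim_{n→∞} a_n / S_n g exists μ-almost everywhere with values in [−∞, +∞), and for every measurable T-invariant set A: inf_n (1/n)∫_A a_n dμ = lim_n (1/n)∫_A a_n dμ = ∫_A h·g dμ, an element of [−∞, +∞). (Kingman ratio ergodic theorem, σ-finite version.) -/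
/-!
Write `S_n` for `S_n g`. Since `T` is conservative and `g > 0`, `S_n → ∞` almost everywhere. For each
natural number `M` the process `u_n = (a_n + M S_n)⁺` is nonnegative and subadditive, `∫ u_1 < ∞`,
and `u_n / S_n = (a_n / S_n + M)⁺`. So it is enough to understand nonnegative processes, and then
to let `M → ∞`.

For a nonnegative subadditive process `u` with `∫ u_1 < ∞` two inequalities hold:

* `n ∫ (limsup u_m / S_m) g ≤ ∫ u_n` for every `n ≥ 1` (`SubaddAE.lintegral_limsup_le`). Averaging
  the decompositions of `[0, m)` into blocks of length `n` over their offsets (`array_average`)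
  shows `n u_m ≤ S_m u_n` up to boundary terms. The terms near `0` are negligible because
  `S_m → ∞`, those near `m` because `u_1 ∘ T^m = o(S_m)` almost everywhere (`ae_eventually_iterate_le`,
  as in the Chacon-Ornstein theorem). This reduces the claim to the additive inequality
  `∫ (limsup S_m f / S_m g) g ≤ ∫ f` (`lintegral_limsup_ratio_le`).
* `limsup (∫ u_n) / n ≤ ∫ (liminf u_m / S_m) g` (`SubaddAE.limsup_lintegral_le`).

The second inequality and the additive one both come from the Katznelson-Weiss argument: cover an
orbit segment greedily by blocks of bounded length on which the process is dominated by a Birkhoff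
sum (`array_cover`, `SubaddAE.lintegral_le_of_cover`).

Together the inequalities give `∫ (limsup u_m / S_m) g ≤ ∫ (liminf u_m / S_m) g < ∞`, so the ratios
`u_m / S_m` converge almost everywhere. Applied for all `M`, this yields the convergence of
`a_n / S_n` to some `h < ∞` (`lower_eq_upper`). On an invariant set `A` the same inequalities hold
for the restriction of `μ` to `A`, and
`∫_A a_n = lim_M (∫_A (a_n + M S_n)⁺ - M n ∫_A g)` as a decreasing limit, and likewise for `h g`
(`eint_truncation`). Hence `∫_A h g ≤ (∫_A a_n) / n` for all `n`, and
`limsup (∫_A a_n) / n ≤ ∫_A h g`.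
-/

open MeasureTheory Filter Topology

/-- The nonnegative part of an extended real, as an extended nonnegative real. -/
noncomputable def erealToENNReal (x : EReal) : ENNReal :=
  if x = ⊤ then ⊤ else ENNReal.ofReal x.toReal


/-- The (possibly infinite) integral of an `EReal`-valued function over a set,
as the difference of the integrals of its positive and negative parts. -/
noncomputable def erealIntegral {X : Type*} [MeasurableSpace X] (μ : Measure X)
    (A : Set X) (f : X → EReal) : EReal :=
  ((∫⁻ x in A, erealToENNReal (f x) ∂μ : ENNReal) : EReal)
    - ((∫⁻ x in A, erealToENNReal (-(f x)) ∂μ : ENNReal) : EReal)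

namespace KingmanRatio

open scoped ENNReal
open Finset (range Ico)

/-! ### Subadditive arrays

Along an orbit `x, T x, T² x, …` a subadditive process is an array `v k n = u n (T^k x)` with
`v k (n + m) ≤ v k n + v (k + n) m`. The lemmas below use only this inequality. -/

lemma array_le_sum (v : ℕ → ℕ → ℝ≥0∞)
    (hv : ∀ k n m, 1 ≤ n → 1 ≤ m → v k (n + m) ≤ v k n + v (k + n) m) :
    ∀ n, 1 ≤ n → ∀ k, v k n ≤ ∑ i ∈ range n, v (k + i) 1 := by
  intro n hn
  induction n, hn using Nat.le_induction with
  | base => intro k; simp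
  | succ n hn ih =>
    intro k
    rw [Finset.sum_range_succ]
    exact (hv k n 1 hn le_rfl).trans (by gcongr; exact ih k)

/-- If from every starting time `k` some block of length `τ ≤ K` is dominated by the sum of `w` over
it, then concatenating such blocks greedily dominates `v k n` by the sum of `w`, up to the last
incomplete block, which is estimated by the one-step values. -/
lemma array_cover (v : ℕ → ℕ → ℝ≥0∞)
    (hv : ∀ k n m, 1 ≤ n → 1 ≤ m → v k (n + m) ≤ v k n + v (k + n) m)
    (w : ℕ → ℝ≥0∞) (K : ℕ)
    (hτ : ∀ k, ∃ τ, 1 ≤ τ ∧ τ ≤ K ∧ v k τ ≤ ∑ i ∈ range τ, w (k + i)) :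
    ∀ n, 1 ≤ n → ∀ k, v k n ≤
      ∑ i ∈ range n, w (k + i) + ∑ i ∈ Ico (n - K) n, v (k + i) 1 := by
  intro n
  induction n using Nat.strong_induction_on with
  | _ n ih =>
  intro hn k
  by_cases hnK : n ≤ K
  · rw [Nat.sub_eq_zero_of_le hnK, ← Finset.range_eq_Ico]
    exact (array_le_sum v hv n hn k).trans le_add_self
  · obtain ⟨τ, h1, hK, hle⟩ := hτ k
    obtain ⟨p, rfl⟩ : ∃ p, n = τ + p := ⟨n - τ, by omega⟩
    have hp : 1 ≤ p := by omega
    calc v k (τ + p) ≤ v k τ + v (k + τ) p := hv k τ p h1 hp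
      _ ≤ ∑ i ∈ range τ, w (k + i) + (∑ i ∈ range p, w (k + τ + i)
            + ∑ i ∈ Ico (p - K) p, v (k + τ + i) 1) := by
          gcongr
          exact ih p (by omega) hp (k + τ)
      _ = ∑ i ∈ range (τ + p), w (k + i) + ∑ i ∈ Ico (p - K) p, v (k + τ + i) 1 := by
          rw [Finset.sum_range_add, add_assoc]
          simp only [add_assoc]
      _ ≤ _ := by
          refine add_le_add le_rfl ?_
          have h := Finset.sum_Ico_add' (fun i => v (k + i) 1) (p - K) p τ
          have h' : ∑ i ∈ Ico (p - K) p, v (k + τ + i) 1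
              = ∑ i ∈ Ico (p - K) p, v (k + (i + τ)) 1 :=
            Finset.sum_congr rfl fun i _ => by congr 1; ring
          rw [h', h, add_comm p τ]
          exact Finset.sum_le_sum_of_subset (Finset.Ico_subset_Ico_left (by omega))

/-- Cut `[0, m)` into blocks of length `n` starting at `i`, and sum over the offsets `i < n`: every
interior starting point is used once, so `n * v 0 m` is at most the sum of all blocks of length `n`,
up to two boundary terms at distance `≤ n` from the ends of `[0, m)`. -/
lemma array_average (v : ℕ → ℕ → ℝ≥0∞)
    (hv : ∀ k n m, 1 ≤ n → 1 ≤ m → v k (n + m) ≤ v k n + v (k + n) m)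
    (n m : ℕ) (hn : 1 ≤ n) (hm : n ≤ m) :
    n * v 0 m ≤ ∑ k ∈ range m, v k n
      + n * (∑ i ∈ range n, v i 1 + ∑ i ∈ Ico (m - n) m, v i 1) := by
  -- `z k` is the value of the block from `k` to the right end `m`.
  set z : ℕ → ℝ≥0∞ := fun k => v k (m - k) with hz
  have hend : ∀ k, m - n ≤ k → k < m → z k ≤ ∑ i ∈ Ico (m - n) m, v i 1 := by
    intro k hk hkm
    refine (array_le_sum v hv (m - k) (by omega) k).trans ?_
    rw [← Finset.sum_Ico_eq_sum_range (fun i => v i 1) k m]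
    exact Finset.sum_le_sum_of_subset (Finset.Ico_subset_Ico_left hk)
  -- The window sum `Z d = ∑_{i<n} z (d + i)` satisfies `Z d ≤ v d n + Z (d + 1)`, because
  -- `z d ≤ v d n + z (d + n)`.
  have hZ : ∀ d, d + n ≤ m → ∑ i ∈ range n, z i ≤
      ∑ k ∈ range d, v k n + ∑ i ∈ range n, z (d + i) := by
    intro d
    induction d with
    | zero => intro _; simp
    | succ d ih =>
      intro hd
      refine (ih (by omega)).trans ?_
      rw [Finset.sum_range_succ, add_assoc]
      refine add_le_add le_rfl ?_
      have h1 : z d ≤ v d n + z (d + n) := by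
        have := hv d n (m - (d + n)) hn (by omega)
        rwa [show n + (m - (d + n)) = m - d by omega] at this
      obtain ⟨p, rfl⟩ : ∃ p, n = p + 1 := ⟨n - 1, by omega⟩
      rw [Finset.sum_range_succ', Finset.sum_range_succ (fun i => z (d + 1 + i))]
      have h2 : ∑ i ∈ range p, z (d + (i + 1)) = ∑ i ∈ range p, z (d + 1 + i) :=
        Finset.sum_congr rfl fun i _ => by congr 1; ring
      rw [h2, add_left_comm, show d + 1 + p = d + (p + 1) by ring]
      gcongr
      exact h1
  have hstart : ∀ i ∈ range n, v 0 m ≤ ∑ i ∈ range n, v i 1 + z i := by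
    intro i hi
    have hi' : i < n := Finset.mem_range.1 hi
    rcases Nat.eq_zero_or_pos i with rfl | h0
    · exact le_add_self
    · have h1 := hv 0 i (m - i) h0 (by omega)
      rw [show i + (m - i) = m by omega, zero_add] at h1
      refine h1.trans (add_le_add ?_ le_rfl)
      refine (array_le_sum v hv i h0 0).trans ?_
      simp only [zero_add]
      exact Finset.sum_le_sum_of_subset (Finset.range_mono hi'.le)
  calc (n : ℝ≥0∞) * v 0 m = ∑ _i ∈ range n, v 0 m := by simp
    _ ≤ ∑ i ∈ range n, (∑ i ∈ range n, v i 1 + z i) := Finset.sum_le_sum hstart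
    _ = n * ∑ i ∈ range n, v i 1 + ∑ i ∈ range n, z i := by
        rw [Finset.sum_add_distrib]; simp
    _ ≤ n * ∑ i ∈ range n, v i 1 + (∑ k ∈ range (m - n), v k n
          + n * ∑ i ∈ Ico (m - n) m, v i 1) := by
        gcongr
        refine (hZ (m - n) (by omega)).trans ?_
        gcongr
        refine (Finset.sum_le_sum (g := fun _ => ∑ i ∈ Ico (m - n) m, v i 1) ?_).trans (by simp)
        intro i hi
        have := Finset.mem_range.1 hi
        exact hend _ (by omega) (by omega)
    _ ≤ _ := by
        rw [mul_add, add_left_comm]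
        gcongr
        omega

/-! ### Subadditive processes and their integrals -/

variable {X : Type*} [MeasurableSpace X] {μ : Measure X} {T : X → X}

lemma ae_orbit (hT : MeasurePreserving T μ μ) {P : X → Prop} (h : ∀ᵐ x ∂μ, P x) :
    ∀ᵐ x ∂μ, ∀ k, P (T^[k] x) :=
  ae_all_iff.2 fun k => (hT.iterate k).quasiMeasurePreserving.ae h

lemma measurable_birkhoffSum {M : Type*} [AddCommMonoid M] [MeasurableSpace M] [MeasurableAdd₂ M]
    (hT : Measurable T) {f : X → M} (hf : Measurable f) (n : ℕ) :
    Measurable (birkhoffSum T f n) := by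
  unfold birkhoffSum
  exact Finset.measurable_sum _ fun k _ => hf.comp (hT.iterate k)

lemma lintegral_birkhoffSum (hT : MeasurePreserving T μ μ) {f : X → ℝ≥0∞} (hf : Measurable f)
    (n : ℕ) : ∫⁻ x, birkhoffSum T f n x ∂μ = n * ∫⁻ x, f x ∂μ := by
  unfold birkhoffSum
  rw [lintegral_finsetSum (f := fun k x => f (T^[k] x)) _
    fun k _ => hf.comp (hT.measurable.iterate k)]
  simp [(hT.iterate _).lintegral_comp hf]

/-- The sequence `u` of nonnegative functions is subadditive along `T`, almost everywhere for each
pair of positive indices. Nothing is required of `u 0`. -/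
def SubaddAE (T : X → X) (μ : Measure X) (u : ℕ → X → ℝ≥0∞) : Prop :=
  ∀ n ≥ 1, ∀ m ≥ 1, ∀ᵐ x ∂μ, u (n + m) x ≤ u n x + u m (T^[n] x)

lemma SubaddAE.orbit {u : ℕ → X → ℝ≥0∞} (hu : SubaddAE T μ u) (hT : MeasurePreserving T μ μ) :
    ∀ᵐ x ∂μ, ∀ k n m, 1 ≤ n → 1 ≤ m →
      u (n + m) (T^[k] x) ≤ u n (T^[k] x) + u m (T^[k + n] x) := by
  have h : ∀ᵐ x ∂μ, ∀ n m, 1 ≤ n → 1 ≤ m → u (n + m) x ≤ u n x + u m (T^[n] x) := by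
    refine ae_all_iff.2 fun n => ae_all_iff.2 fun m => ?_
    by_cases hn : 1 ≤ n
    · by_cases hm : 1 ≤ m
      · filter_upwards [hu n hn m hm] with x hx _ _ using hx
      · exact ae_of_all _ fun x _ h => absurd h hm
    · exact ae_of_all _ fun x h => absurd h hn
  filter_upwards [ae_orbit hT h] with x hx k n m hn hm
  have := hx k n m hn hm
  rwa [← Function.iterate_add_apply, add_comm n k] at this

lemma SubaddAE.lintegral_le {u : ℕ → X → ℝ≥0∞} (hu : SubaddAE T μ u)
    (hT : MeasurePreserving T μ μ) (hum : ∀ n, Measurable (u n)) {n : ℕ} (hn : 1 ≤ n) :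
    ∫⁻ x, u n x ∂μ ≤ n * ∫⁻ x, u 1 x ∂μ := by
  rw [← lintegral_birkhoffSum hT (hum 1)]
  refine lintegral_mono_ae ?_
  filter_upwards [hu.orbit hT] with x hx
  have := array_le_sum (fun k n => u n (T^[k] x)) hx n hn 0
  simpa [birkhoffSum] using this

/-- Integrated form of the greedy block decomposition. If almost every point has a time `τ ≤ K` at
which `u` is dominated by the Birkhoff sum of `w`, then `∫ u n ≤ n ∫ w`, up to an error
that does not depend on `n`. -/
lemma SubaddAE.lintegral_le_of_cover {u : ℕ → X → ℝ≥0∞} (hu : SubaddAE T μ u)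
    (hT : MeasurePreserving T μ μ) (hum : ∀ n, Measurable (u n))
    {w : X → ℝ≥0∞} (hw : Measurable w) (K : ℕ)
    (hτ : ∀ᵐ x ∂μ, ∃ τ, 1 ≤ τ ∧ τ ≤ K ∧ u τ x ≤ birkhoffSum T w τ x) {n : ℕ} (hn : 1 ≤ n) :
    ∫⁻ x, u n x ∂μ ≤ n * ∫⁻ x, w x ∂μ + K * ∫⁻ x, u 1 x ∂μ := by
  have key : ∀ᵐ x ∂μ, u n x ≤ birkhoffSum T w n x + ∑ i ∈ Ico (n - K) n, u 1 (T^[i] x) := by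
    filter_upwards [hu.orbit hT, ae_orbit hT hτ] with x hx hx'
    have := array_cover (fun k n => u n (T^[k] x)) hx (fun k => w (T^[k] x)) K
      (fun k => by
        obtain ⟨τ, h1, h2, h3⟩ := hx' k
        refine ⟨τ, h1, h2, h3.trans_eq ?_⟩
        refine Finset.sum_congr rfl fun i _ => ?_
        rw [← Function.iterate_add_apply, add_comm]) n hn 0
    simpa [birkhoffSum] using this
  refine (lintegral_mono_ae key).trans ?_
  rw [lintegral_add_left (measurable_birkhoffSum hT.measurable hw n),
    lintegral_birkhoffSum hT hw,
    lintegral_finsetSum (f := fun k x => u 1 (T^[k] x)) _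
      fun k _ => (hum 1).comp (hT.measurable.iterate k)]
  simp only [(hT.iterate _).lintegral_comp (hum 1)]
  gcongr
  rw [Finset.sum_const, nsmul_eq_mul, Nat.card_Ico]
  gcongr
  exact_mod_cast (by omega : n - (n - K) ≤ K)

/-- The end term `f ∘ T^m` is negligible with respect to `S_m g`. With
`H_m = (f ∘ T^m - ε S_m g)⁺` and `E_m = {H_m > 0}` one has `H_{m+1} ≤ H_m ∘ T`, and even
`H_{m+1} + ε g ≤ H_m ∘ T` on `E_{m+1}`. Integrating and summing gives `∑_m ∫_{E_m} g < ∞`, and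
Borel-Cantelli for the measure `g μ` shows that almost every point lies in finitely many of the `E_m`. -/
lemma ae_eventually_iterate_le (hT : MeasurePreserving T μ μ) {f g : X → ℝ≥0∞}
    (hf : Measurable f) (hg : Measurable g) (hfi : ∫⁻ x, f x ∂μ ≠ ⊤) (hg0 : ∀ x, g x ≠ 0)
    {ε : ℝ≥0∞} (hε : ε ≠ 0) :
    ∀ᵐ x ∂μ, ∀ᶠ m in atTop, f (T^[m] x) ≤ ε * birkhoffSum T g m x := by
  have hS := fun n => measurable_birkhoffSum hT.measurable hg n
  have hfT := fun n => hf.comp (hT.measurable.iterate n)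
  set H : ℕ → X → ℝ≥0∞ := fun m x => f (T^[m] x) - ε * birkhoffSum T g m x with hH
  set E : ℕ → Set X := fun m => {x | ε * birkhoffSum T g m x < f (T^[m] x)} with hE
  have hEm : ∀ m, MeasurableSet (E m) := fun m =>
    measurableSet_lt ((hS m).const_mul ε) (hfT m)
  have hHm : ∀ m, Measurable (H m) := fun m => (hfT m).sub ((hS m).const_mul ε)
  have hstep : ∀ m x, H (m + 1) x + (E (m + 1)).indicator (fun x => ε * g x) x ≤ H m (T x) := by
    intro m x
    by_cases hx : x ∈ E (m + 1)
    · rw [Set.indicator_of_mem hx]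
      have hx' : ε * birkhoffSum T g (m + 1) x < f (T^[m + 1] x) := hx
      simp only [hH]
      rw [birkhoffSum_succ', mul_add] at hx' ⊢
      rw [Function.iterate_succ_apply] at hx' ⊢
      rw [add_comm (ε * g x), ← tsub_tsub, tsub_add_cancel_of_le]
      exact ENNReal.le_sub_of_add_le_right (ne_top_of_lt (le_add_self.trans_lt hx')) hx'.le
    · rw [Set.indicator_of_notMem hx, add_zero]
      have hx' : f (T^[m + 1] x) ≤ ε * birkhoffSum T g (m + 1) x := not_lt.1 hx
      simp only [hH]
      rw [tsub_eq_zero_of_le hx']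
      exact zero_le
  have hsum : ∀ m, ∫⁻ x, H m x ∂μ + ∑ j ∈ range m, ε * (μ.withDensity g) (E (j + 1))
      ≤ ∫⁻ x, f x ∂μ := by
    intro m
    induction m with
    | zero => simp [hH]
    | succ m ih =>
      refine le_trans ?_ ih
      rw [Finset.sum_range_succ, add_comm (∑ j ∈ range m, _), ← add_assoc]
      gcongr ?_ + _
      have h := lintegral_mono (μ := μ) (hstep m)
      rw [lintegral_add_left (hHm _), hT.lintegral_comp (hHm m), lintegral_indicator (hEm _),
        lintegral_const_mul _ hg] at h
      rwa [withDensity_apply _ (hEm _)]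
  have htsum : ∑' j, (μ.withDensity g) (E (j + 1)) ≠ ⊤ := by
    have h1 : ∑' j, ε * (μ.withDensity g) (E (j + 1)) ≤ ∫⁻ x, f x ∂μ := by
      rw [ENNReal.tsum_eq_iSup_nat]
      exact iSup_le fun m => le_add_self.trans (hsum m)
    rw [ENNReal.tsum_mul_left] at h1
    intro h
    rw [h, ENNReal.mul_top hε] at h1
    exact hfi (top_le_iff.1 h1)
  have h := ae_eventually_notMem htsum
  rw [ae_withDensity_iff hg] at h
  filter_upwards [h] with x hx
  have hx := hx (hg0 x)
  rw [eventually_atTop] at hx ⊢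
  obtain ⟨N, hN⟩ := hx
  refine ⟨N + 1, fun m hm => ?_⟩
  have := hN (m - 1) (by omega)
  rw [show m - 1 + 1 = m by omega] at this
  exact not_lt.1 this

/-- Fatou's lemma for an almost everywhere convergent sequence. -/
lemma lintegral_le_of_tendsto_ae {F : ℕ → X → ℝ≥0∞} {G : X → ℝ≥0∞} {C : ℝ≥0∞}
    (hF : ∀ n, Measurable (F n)) (hC : ∀ n, ∫⁻ x, F n x ∂μ ≤ C)
    (h : ∀ᵐ x ∂μ, Tendsto (fun n => F n x) atTop (𝓝 (G x))) : ∫⁻ x, G x ∂μ ≤ C := by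
  calc ∫⁻ x, G x ∂μ = ∫⁻ x, liminf (fun n => F n x) atTop ∂μ :=
        lintegral_congr_ae (by filter_upwards [h] with x hx using hx.liminf_eq.symm)
    _ ≤ liminf (fun n => ∫⁻ x, F n x ∂μ) atTop := lintegral_liminf_le hF
    _ ≤ C := liminf_le_of_frequently_le' (Frequently.of_forall hC)

/-! ### Ratios of Birkhoff sums -/

lemma tendsto_eps : Tendsto (fun k : ℕ => ((k + 1 : ℕ) : ℝ≥0∞)⁻¹) atTop (𝓝 0) :=
  ENNReal.tendsto_inv_nat_nhds_zero.comp (tendsto_add_atTop_nat 1)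

lemma eps_ne_zero (k : ℕ) : ((k + 1 : ℕ) : ℝ≥0∞)⁻¹ ≠ 0 :=
  ENNReal.inv_ne_zero.2 (ENNReal.natCast_ne_top _)

lemma eps_ne_top (k : ℕ) : ((k + 1 : ℕ) : ℝ≥0∞)⁻¹ ≠ ⊤ :=
  ENNReal.inv_ne_top.2 (by simp)

lemma limsup_div_nat_le {p : ℕ → ℝ≥0∞} {F C : ℝ≥0∞} (hC : C ≠ ⊤)
    (h : ∀ n : ℕ, 1 ≤ n → p n ≤ n * F + C) : limsup (fun n => p n / n) atTop ≤ F := by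
  have h1 : Tendsto (fun n : ℕ => F + C / n) atTop (𝓝 (F + 0)) :=
    tendsto_const_nhds.add (ENNReal.Tendsto.const_div ENNReal.tendsto_nat_nhds_top (Or.inr hC)
      |>.trans_eq (by simp))
  rw [add_zero] at h1
  rw [← h1.limsup_eq]
  refine limsup_le_limsup ?_
  filter_upwards [eventually_ge_atTop 1] with n hn
  have hn0 : (n : ℝ≥0∞) ≠ 0 := by exact_mod_cast (by omega : n ≠ 0)
  calc p n / n ≤ (n * F + C) / n := by gcongr; exact h n hn
    _ = F + C / n := by
      rw [ENNReal.add_div, mul_comm, ENNReal.mul_div_cancel_right hn0 (ENNReal.natCast_ne_top n)]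

omit [MeasurableSpace X] in
lemma birkhoffSum_ne_zero {g : X → ℝ≥0∞} (hg0 : ∀ x, g x ≠ 0) {n : ℕ} (hn : 1 ≤ n) (x : X) :
    birkhoffSum T g n x ≠ 0 := by
  intro h
  have := (Finset.sum_eq_zero_iff.1 h) 0 (Finset.mem_range.2 hn)
  exact hg0 _ this

omit [MeasurableSpace X] in
lemma birkhoffSum_ne_top {g : X → ℝ≥0∞} (hgt : ∀ x, g x ≠ ⊤) (n : ℕ) (x : X) :
    birkhoffSum T g n x ≠ ⊤ :=
  ENNReal.sum_ne_top.2 fun _ _ => hgt _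

omit [MeasurableSpace X] in
/-- The upper limit of `S_n f / S_n g` does not increase along orbits: replacing `x` by `T x`
removes `f x ≥ 0` from the numerator and `g x`, negligible since `S_n g → ∞`, from the
denominator. -/
lemma limsup_ratio_comp_le {f g : X → ℝ≥0∞} (hgt : ∀ x, g x ≠ ⊤) {x : X}
    (hS : Tendsto (fun n => birkhoffSum T g n (T x)) atTop (𝓝 ⊤)) :
    limsup (fun n => birkhoffSum T f n (T x) / birkhoffSum T g n (T x)) atTop ≤
      limsup (fun n => birkhoffSum T f n x / birkhoffSum T g n x) atTop := by
  set L := limsup (fun n => birkhoffSum T f n x / birkhoffSum T g n x) atTop with hL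
  have key : ∀ k : ℕ, limsup (fun n => birkhoffSum T f n (T x) / birkhoffSum T g n (T x)) atTop
      ≤ (1 + ((k + 1 : ℕ) : ℝ≥0∞)⁻¹) * L := by
    intro k
    set ε := ((k + 1 : ℕ) : ℝ≥0∞)⁻¹ with hε
    have hε1 : (1 + ε) ≠ ⊤ := ENNReal.add_ne_top.2 ⟨by simp, eps_ne_top k⟩
    have h1 : Tendsto (fun n => ε * birkhoffSum T g n (T x)) atTop (𝓝 (ε * ⊤)) :=
      ENNReal.Tendsto.const_mul hS (Or.inl (by simp))
    rw [ENNReal.mul_top (eps_ne_zero k)] at h1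
    have h2 := h1.eventually_const_lt (lt_top_iff_ne_top.2 (hgt x))
    rw [hL, ← limsup_nat_add (fun n => birkhoffSum T f n x / birkhoffSum T g n x) 1,
      ← ENNReal.limsup_const_mul_of_ne_top hε1]
    refine limsup_le_limsup ?_
    filter_upwards [h2] with n hn
    have h0 : (1 + ε) ≠ 0 := by simp
    calc birkhoffSum T f n (T x) / birkhoffSum T g n (T x)
        = ((1 + ε) * birkhoffSum T f n (T x)) / ((1 + ε) * birkhoffSum T g n (T x)) :=
          (ENNReal.mul_div_mul_left _ _ h0 hε1).symm
      _ ≤ ((1 + ε) * birkhoffSum T f (n + 1) x) / birkhoffSum T g (n + 1) x := by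
          rw [birkhoffSum_succ' T f, birkhoffSum_succ' T g]
          refine ENNReal.div_le_div (mul_le_mul_right le_add_self _) ?_
          rw [add_mul, one_mul, add_comm]
          gcongr
      _ = (1 + ε) * (birkhoffSum T f (n + 1) x / birkhoffSum T g (n + 1) x) := mul_div_assoc _ _ _
  have h3 : Tendsto (fun k : ℕ => (1 + ((k + 1 : ℕ) : ℝ≥0∞)⁻¹) * L) atTop (𝓝 ((1 + 0) * L)) :=
    ENNReal.Tendsto.mul_const (tendsto_const_nhds.add tendsto_eps) (Or.inl (by simp))
  rw [add_zero, one_mul] at h3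
  exact ge_of_tendsto' h3 key

omit [MeasurableSpace X] in
/-- The lower limit of `u n / S_n g` does not decrease along orbits, since `u (n + 1) x` exceeds
`u n (T x)` by at most `u 1 x`, which is negligible with respect to `S_n g`. -/
lemma liminf_ratio_le_comp {u : ℕ → X → ℝ≥0∞} {g : X → ℝ≥0∞} {x : X}
    (hS : Tendsto (fun n => birkhoffSum T g n x) atTop (𝓝 ⊤)) (hu1 : u 1 x ≠ ⊤)
    (hu : ∀ n, 1 ≤ n → u (1 + n) x ≤ u 1 x + u n (T x)) :
    liminf (fun n => u n x / birkhoffSum T g n x) atTop ≤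
      liminf (fun n => u n (T x) / birkhoffSum T g n (T x)) atTop := by
  have key : ∀ k : ℕ, liminf (fun n => u n x / birkhoffSum T g n x) atTop
      ≤ ((k + 1 : ℕ) : ℝ≥0∞)⁻¹ + liminf (fun n => u n (T x) / birkhoffSum T g n (T x)) atTop := by
    intro k
    set ε := ((k + 1 : ℕ) : ℝ≥0∞)⁻¹ with hε
    have h1 : Tendsto (fun n => u 1 x / birkhoffSum T g (n + 1) x) atTop (𝓝 (u 1 x / ⊤)) :=
      ENNReal.Tendsto.const_div (hS.comp (tendsto_add_atTop_nat 1)) (Or.inr hu1)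
    rw [ENNReal.div_top] at h1
    have h2 := h1.eventually_lt_const (pos_iff_ne_zero.2 (eps_ne_zero k))
    rw [← liminf_nat_add _ 1, ← liminf_const_add (F := atTop)
      (f := fun n => u n (T x) / birkhoffSum T g n (T x)) (c := ε)
      (by isBoundedDefault) (by isBoundedDefault)]
    refine liminf_le_liminf ?_
    filter_upwards [h2, eventually_ge_atTop 1] with n hn hn1
    calc u (n + 1) x / birkhoffSum T g (n + 1) x
        ≤ (u 1 x + u n (T x)) / birkhoffSum T g (n + 1) x := by
          gcongr; rw [add_comm]; exact hu n hn1
      _ ≤ ε + u n (T x) / birkhoffSum T g n (T x) := by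
          rw [ENNReal.add_div]
          gcongr
          rw [birkhoffSum_succ']
          exact le_add_self
  have h3 := tendsto_eps.add_const (liminf (fun n => u n (T x) / birkhoffSum T g n (T x)) atTop)
  rw [zero_add] at h3
  exact ge_of_tendsto' h3 key

/-- One half of Hopf's ratio theorem: `∫ L g ≤ ∫ f` for `L = limsup S_n f / S_n g`.
For a bounded `c < L` that does not increase along orbits, every point has a time `n` with
`c S_n g ≤ S_n f`, and `S_n (c g) ≤ c S_n g`. On the set `G_K` where this time is at most `K + 1`,
the block decomposition applied to the restriction of `c g` to `G_K` gives `∫_{G_K} c g ≤ ∫ f`. -/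
lemma lintegral_limsup_ratio_le (hT : MeasurePreserving T μ μ) {f g : X → ℝ≥0∞}
    (hf : Measurable f) (hg : Measurable g)
    (hg0 : ∀ x, g x ≠ 0) (hgt : ∀ x, g x ≠ ⊤) (hgi : ∫⁻ x, g x ∂μ ≠ ⊤)
    (hS : ∀ᵐ x ∂μ, Tendsto (fun n => birkhoffSum T g n x) atTop (𝓝 ⊤)) :
    ∫⁻ x, limsup (fun n => birkhoffSum T f n x / birkhoffSum T g n x) atTop * g x ∂μ
      ≤ ∫⁻ x, f x ∂μ := by
  have hSf := fun n => measurable_birkhoffSum hT.measurable hf n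
  have hSg := fun n => measurable_birkhoffSum hT.measurable hg n
  set L : X → ℝ≥0∞ := fun x => limsup (fun n => birkhoffSum T f n x / birkhoffSum T g n x) atTop
    with hL
  have hLm : Measurable L := Measurable.limsup fun n => (hSf n).div (hSg n)
  have hLT : ∀ᵐ x ∂μ, L (T x) ≤ L x := by
    filter_upwards [ae_orbit hT hS] with x hx
    exact limsup_ratio_comp_le hgt (hx 1)
  -- `c j` is bounded, increases to `L`, and is `< L` wherever it is nonzero.
  set c : ℕ → X → ℝ≥0∞ := fun j x => min (L x) j - ((j + 1 : ℕ) : ℝ≥0∞)⁻¹ with hc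
  have hcm : ∀ j, Measurable (c j) := fun j => (hLm.min measurable_const).sub measurable_const
  have hcT : ∀ j, ∀ᵐ x ∂μ, ∀ i, c j (T^[i] x) ≤ c j x := by
    intro j
    filter_upwards [ae_orbit hT hLT] with x hx i
    have h : L (T^[i] x) ≤ L x := by
      induction i with
      | zero => exact le_rfl
      | succ i ih => rw [Function.iterate_succ_apply']; exact (hx i).trans ih
    simp only [hc]
    gcongr
  refine lintegral_le_of_tendsto_ae (F := fun j x => c j x * g x)
    (fun j => (hcm j).mul hg) (fun j => ?_) (ae_of_all _ fun x => ?_)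
  swap
  · have h1 : Tendsto (fun j : ℕ => min (L x) j) atTop (𝓝 (min (L x) ⊤)) :=
      tendsto_const_nhds.min ENNReal.tendsto_nat_nhds_top
    have h2 := ENNReal.Tendsto.sub h1 tendsto_eps (Or.inr (by simp))
    rw [tsub_zero, min_top_right] at h2
    exact ENNReal.Tendsto.mul_const h2 (Or.inr (hgt x))
  set G : ℕ → Set X := fun K =>
    {x | ∃ n, 1 ≤ n ∧ n ≤ K + 1 ∧ c j x * birkhoffSum T g n x ≤ birkhoffSum T f n x} with hG
  have hGm : ∀ K, MeasurableSet (G K) := by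
    intro K
    have : G K = ⋃ n ∈ Set.Icc 1 (K + 1),
        {x | c j x * birkhoffSum T g n x ≤ birkhoffSum T f n x} := by
      ext x; simp [hG, and_assoc]
    rw [this]
    exact MeasurableSet.biUnion (Set.to_countable _) fun n _ =>
      measurableSet_le ((hcm j).mul (hSg n)) (hSf n)
  have hGex : ∀ x, ∃ K, x ∈ G K := by
    intro x
    rcases eq_or_ne (c j x) 0 with h0 | h0
    · exact ⟨0, 1, le_rfl, le_rfl, by simp [h0]⟩
    · have hlt : c j x < L x := by
        have h1 : c j x ≠ 0 := h0
        have hm : min (L x) (j : ℝ≥0∞) ≠ 0 := by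
          intro h; exact h1 (by simp only [hc]; rw [h, zero_tsub])
        refine lt_of_lt_of_le (ENNReal.sub_lt_self ?_ hm (eps_ne_zero j)) (min_le_left _ _)
        exact ne_top_of_le_ne_top (ENNReal.natCast_ne_top j) (min_le_right _ _)
      obtain ⟨n, hn, hn1⟩ := ((frequently_lt_of_lt_limsup (by isBoundedDefault) hlt).and_eventually
        (eventually_ge_atTop 1)).exists
      refine ⟨n, n, hn1, by omega, ?_⟩
      exact (ENNReal.le_div_iff_mul_le (Or.inl (birkhoffSum_ne_zero hg0 hn1 x))
        (Or.inl (birkhoffSum_ne_top hgt n x))).1 hn.le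
  have hGmono : Monotone G := fun K K' h x ⟨n, h1, h2, h3⟩ => ⟨n, h1, by omega, h3⟩
  have hcg : Measurable fun x => c j x * g x := (hcm j).mul hg
  refine lintegral_le_of_tendsto_ae (F := fun K => (G K).indicator fun x => c j x * g x)
    (fun K => hcg.indicator (hGm K)) (fun K => ?_) (ae_of_all _ fun x => ?_)
  swap
  · obtain ⟨K, hK⟩ := hGex x
    refine tendsto_const_nhds.congr' ?_
    filter_upwards [eventually_ge_atTop K] with K' hK'
    rw [Set.indicator_of_mem (hGmono hK' hK)]
  set w : X → ℝ≥0∞ := (G K).indicator fun x => c j x * g x with hw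
  have hwm : Measurable w := hcg.indicator (hGm K)
  have hwle : ∀ x, w x ≤ c j x * g x := fun x => Set.indicator_le_self _ _ x
  have hwi : ∫⁻ x, w x ∂μ ≠ ⊤ := by
    refine ne_top_of_le_ne_top (ENNReal.mul_ne_top (ENNReal.natCast_ne_top j) hgi)
      ((lintegral_mono fun x => ?_).trans_eq (lintegral_const_mul _ hg))
    refine (hwle x).trans ?_
    gcongr
    exact tsub_le_self.trans (min_le_right _ _)
  have hcover := fun (n : ℕ) (hn : 1 ≤ n) => SubaddAE.lintegral_le_of_cover (μ := μ) (T := T)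
    (u := fun n => birkhoffSum T w n) (w := f)
    (fun n _ m _ => ae_of_all _ fun x => (birkhoffSum_add T w n m x).le) hT
    (fun n => measurable_birkhoffSum hT.measurable hwm n) hf (K + 1) (by
      filter_upwards [hcT j] with x hx
      by_cases hxG : x ∈ G K
      · obtain ⟨n, h1, h2, h3⟩ := hxG
        refine ⟨n, h1, h2, le_trans ?_ h3⟩
        unfold birkhoffSum
        rw [Finset.mul_sum]
        refine Finset.sum_le_sum fun i _ => (hwle _).trans ?_
        gcongr
        exact hx i
      · refine ⟨1, le_rfl, by omega, ?_⟩
        rw [birkhoffSum_one, hw, Set.indicator_of_notMem hxG]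
        exact zero_le) hn
  -- Divide by `n` and let `n → ∞` to remove the boundary term.
  have h := limsup_div_nat_le (p := fun n => n * ∫⁻ x, w x ∂μ) (F := ∫⁻ x, f x ∂μ)
    (C := (K + 1 : ℕ) * ∫⁻ x, w x ∂μ) (ENNReal.mul_ne_top (ENNReal.natCast_ne_top _) hwi) (by
      intro n hn
      have := hcover n hn
      simp only [birkhoffSum_one'] at this
      rwa [lintegral_birkhoffSum hT hwm] at this)
  refine le_trans (le_of_eq ?_) h
  refine (Tendsto.limsup_eq (tendsto_const_nhds.congr' ?_)).symm
  filter_upwards [eventually_ge_atTop 1] with n hn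
  rw [mul_comm, ENNReal.mul_div_cancel_right (by exact_mod_cast (by omega : n ≠ 0))
    (ENNReal.natCast_ne_top n)]

/-! ### Nonnegative subadditive processes -/

/-- Lower bound for the integrals. Averaging over the blocks of length `n` gives
`n u_m ≤ S_m u_n +` boundary terms. The boundary terms are negligible with respect to `S_m g`,
so `n limsup u_m / S_m g ≤ limsup S_m u_n / S_m g`, whose integral against `g` is at most
`∫ u_n`. -/
lemma SubaddAE.lintegral_limsup_le {u : ℕ → X → ℝ≥0∞} (hu : SubaddAE T μ u)
    (hT : MeasurePreserving T μ μ) (hum : ∀ n, Measurable (u n)) (hu1 : ∫⁻ x, u 1 x ∂μ ≠ ⊤)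
    {g : X → ℝ≥0∞} (hg : Measurable g)
    (hg0 : ∀ x, g x ≠ 0) (hgt : ∀ x, g x ≠ ⊤) (hgi : ∫⁻ x, g x ∂μ ≠ ⊤)
    (hS : ∀ᵐ x ∂μ, Tendsto (fun n => birkhoffSum T g n x) atTop (𝓝 ⊤)) {n : ℕ} (hn : 1 ≤ n) :
    n * ∫⁻ x, limsup (fun m => u m x / birkhoffSum T g m x) atTop * g x ∂μ ≤ ∫⁻ x, u n x ∂μ := by
  have hSg := fun n => measurable_birkhoffSum hT.measurable hg n
  have hm : Measurable fun x => limsup (fun m => u m x / birkhoffSum T g m x) atTop * g x :=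
    (Measurable.limsup fun m => (hum m).div (hSg m)).mul hg
  rw [← lintegral_const_mul _ hm]
  refine le_trans (lintegral_mono_ae ?_)
    (lintegral_limsup_ratio_le hT (hum n) hg hg0 hgt hgi hS)
  have hend : ∀ᵐ x ∂μ, ∀ k : ℕ, ∀ᶠ m in atTop,
      u 1 (T^[m] x) ≤ ((k + 1 : ℕ) : ℝ≥0∞)⁻¹ * birkhoffSum T g m x :=
    ae_all_iff.2 fun k => ae_eventually_iterate_le hT (hum 1) hg hu1 hg0 (eps_ne_zero k)
  filter_upwards [hu.orbit hT, hend, hS, ae_orbit hT (ae_lt_top (hum 1) hu1)]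
    with x hux hendx hSx hfin
  rw [← mul_assoc]
  gcongr
  -- Each of the two boundary sums is at most a multiple of `ε S_m g` for large `m`.
  have key : ∀ k : ℕ, n * limsup (fun m => u m x / birkhoffSum T g m x) atTop ≤
      limsup (fun m => birkhoffSum T (u n) m x / birkhoffSum T g m x) atTop
        + (n * (1 + n)) * ((k + 1 : ℕ) : ℝ≥0∞)⁻¹ := by
    intro k
    set ε := ((k + 1 : ℕ) : ℝ≥0∞)⁻¹ with hε
    have h1 : Tendsto (fun m => ε * birkhoffSum T g m x) atTop (𝓝 (ε * ⊤)) :=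
      ENNReal.Tendsto.const_mul hSx (Or.inl (by simp))
    rw [ENNReal.mul_top (eps_ne_zero k)] at h1
    have hstart : ∑ i ∈ range n, u 1 (T^[i] x) < ⊤ := ENNReal.sum_lt_top.2 fun i _ => hfin i
    obtain ⟨J, hJ⟩ := eventually_atTop.1 (hendx k)
    rw [← ENNReal.limsup_const_mul_of_ne_top (ENNReal.natCast_ne_top n),
      ← limsup_add_const (F := atTop) _ _ (by isBoundedDefault) (by isBoundedDefault)]
    refine limsup_le_limsup ?_
    filter_upwards [h1.eventually_const_lt hstart, eventually_ge_atTop (J + n)] with m hm1 hm2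
    have hSm0 := birkhoffSum_ne_zero (T := T) hg0 (by omega : 1 ≤ m) x
    have hSmt := birkhoffSum_ne_top (T := T) hgt m x
    have hlast : ∑ i ∈ Ico (m - n) m, u 1 (T^[i] x) ≤ n * (ε * birkhoffSum T g m x) := by
      refine (Finset.sum_le_sum (g := fun _ => ε * birkhoffSum T g m x) ?_).trans_eq ?_
      · intro i hi
        have hi := Finset.mem_Ico.1 hi
        refine (hJ i (by omega)).trans ?_
        gcongr
        exact Finset.sum_le_sum_of_subset (Finset.range_mono hi.2.le)
      · rw [Finset.sum_const, Nat.card_Ico, nsmul_eq_mul, Nat.sub_sub_self (by omega)]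
    have havg : n * u m x ≤ birkhoffSum T (u n) m x
        + n * (∑ i ∈ range n, u 1 (T^[i] x) + ∑ i ∈ Ico (m - n) m, u 1 (T^[i] x)) :=
      array_average (fun k n => u n (T^[k] x)) hux n m hn (by omega)
    calc n * (u m x / birkhoffSum T g m x) = (n * u m x) / birkhoffSum T g m x :=
          (mul_div_assoc _ _ _).symm
      _ ≤ (birkhoffSum T (u n) m x + (n * (1 + n) * ε) * birkhoffSum T g m x)
            / birkhoffSum T g m x := by
          gcongr
          calc n * u m x ≤ birkhoffSum T (u n) m x
                + n * (ε * birkhoffSum T g m x + n * (ε * birkhoffSum T g m x)) := by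
                refine havg.trans ?_
                gcongr
            _ = _ := by ring
      _ = _ := by rw [ENNReal.add_div, ENNReal.mul_div_cancel_right hSm0 hSmt]
  have h3 := (ENNReal.Tendsto.const_mul (a := n * (1 + n)) tendsto_eps
    (Or.inr (by finiteness))).const_add
      (limsup (fun m => birkhoffSum T (u n) m x / birkhoffSum T g m x) atTop)
  rw [mul_zero, add_zero] at h3
  exact ge_of_tendsto' h3 key

/-- Upper bound for the integrals. Let `L = liminf u_m / S_m g`, which does not decrease along
orbits. Every point has a time `n` with `u_n ≤ (L + ε) S_n g ≤ S_n ((L + ε) g)`. Where this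
time exceeds `K + 1`, use blocks of length `1` and add `u_1` to the majorant; the integral of this
correction tends to `0` as `K → ∞`. -/
lemma SubaddAE.limsup_lintegral_le {u : ℕ → X → ℝ≥0∞} (hu : SubaddAE T μ u)
    (hT : MeasurePreserving T μ μ) (hum : ∀ n, Measurable (u n)) (hu1 : ∫⁻ x, u 1 x ∂μ ≠ ⊤)
    {g : X → ℝ≥0∞} (hg : Measurable g)
    (hg0 : ∀ x, g x ≠ 0) (hgt : ∀ x, g x ≠ ⊤) (hgi : ∫⁻ x, g x ∂μ ≠ ⊤)
    (hS : ∀ᵐ x ∂μ, Tendsto (fun n => birkhoffSum T g n x) atTop (𝓝 ⊤)) :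
    limsup (fun n => (∫⁻ x, u n x ∂μ) / n) atTop ≤
      ∫⁻ x, liminf (fun m => u m x / birkhoffSum T g m x) atTop * g x ∂μ := by
  have hSg := fun n => measurable_birkhoffSum hT.measurable hg n
  set L : X → ℝ≥0∞ := fun x => liminf (fun m => u m x / birkhoffSum T g m x) atTop with hL
  have hLm : Measurable L := Measurable.liminf fun m => (hum m).div (hSg m)
  have hLT : ∀ᵐ x ∂μ, ∀ i, L x ≤ L (T^[i] x) := by
    have h : ∀ᵐ x ∂μ, L x ≤ L (T x) := by
      filter_upwards [hu.orbit hT, hS, ae_lt_top (hum 1) hu1] with x hx hSx h1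
      exact liminf_ratio_le_comp hSx h1.ne fun n hn => hx 0 1 n le_rfl hn
    filter_upwards [ae_orbit hT h] with x hx i
    induction i with
    | zero => exact le_rfl
    | succ i ih => rw [Function.iterate_succ_apply']; exact ih.trans (hx i)
  have key : ∀ k : ℕ, limsup (fun n => (∫⁻ x, u n x ∂μ) / n) atTop ≤
      ∫⁻ x, L x * g x ∂μ + ((k + 1 : ℕ) : ℝ≥0∞)⁻¹ * ∫⁻ x, g x ∂μ := by
    intro k
    set ε := ((k + 1 : ℕ) : ℝ≥0∞)⁻¹ with hε
    set G : ℕ → Set X := fun K =>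
      {x | ∃ n, 1 ≤ n ∧ n ≤ K + 1 ∧ u n x ≤ (L x + ε) * birkhoffSum T g n x} with hG
    have hGm : ∀ K, MeasurableSet (G K) := by
      intro K
      have : G K = ⋃ n ∈ Set.Icc 1 (K + 1), {x | u n x ≤ (L x + ε) * birkhoffSum T g n x} := by
        ext x; simp [hG, and_assoc]
      rw [this]
      exact MeasurableSet.biUnion (Set.to_countable _) fun n _ =>
        measurableSet_le (hum n) ((hLm.add_const ε).mul (hSg n))
    have hGex : ∀ x, ∃ K, x ∈ G K := by
      intro x
      rcases eq_or_ne (L x) ⊤ with h0 | h0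
      · refine ⟨0, 1, le_rfl, le_rfl, ?_⟩
        rw [h0, top_add, ENNReal.top_mul (birkhoffSum_ne_zero hg0 le_rfl x)]
        exact le_top
      · obtain ⟨n, hn, hn1⟩ := ((frequently_lt_of_liminf_lt (by isBoundedDefault)
          (ENNReal.lt_add_right h0 (eps_ne_zero k))).and_eventually
          (eventually_ge_atTop 1)).exists
        refine ⟨n, n, hn1, by omega, ?_⟩
        exact (ENNReal.div_le_iff_le_mul (Or.inl (birkhoffSum_ne_zero hg0 hn1 x))
          (Or.inl (birkhoffSum_ne_top hgt n x))).1 hn.le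
    have hGmono : Monotone G := fun K K' h x ⟨n, h1, h2, h3⟩ => ⟨n, h1, by omega, h3⟩
    have hbad : Tendsto (fun K => ∫⁻ x, (G K)ᶜ.indicator (u 1) x ∂μ) atTop (𝓝 0) := by
      have h := tendsto_lintegral_of_dominated_convergence (μ := μ)
        (F := fun K => (G K)ᶜ.indicator (u 1)) (f := fun _ => 0) (u 1)
        (fun K => (hum 1).indicator (hGm K).compl)
        (fun K => ae_of_all _ fun x => Set.indicator_le_self _ _ x) hu1
        (ae_of_all _ fun x => by
          obtain ⟨K, hK⟩ := hGex x
          refine tendsto_const_nhds.congr' ?_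
          filter_upwards [eventually_ge_atTop K] with K' hK'
          rw [Set.indicator_of_notMem]
          exact fun h => h (hGmono hK' hK))
      simpa using h
    have hK : ∀ K, limsup (fun n => (∫⁻ x, u n x ∂μ) / n) atTop ≤
        (∫⁻ x, L x * g x ∂μ + ε * ∫⁻ x, g x ∂μ) + ∫⁻ x, (G K)ᶜ.indicator (u 1) x ∂μ := by
      intro K
      have hLg : Measurable fun x => (L x + ε) * g x := (hLm.add_const ε).mul hg
      have hind : Measurable ((G K)ᶜ.indicator (u 1)) := (hum 1).indicator (hGm K).compl
      refine limsup_div_nat_le (C := (K + 1 : ℕ) * ∫⁻ x, u 1 x ∂μ)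
        (ENNReal.mul_ne_top (ENNReal.natCast_ne_top _) hu1) fun n hn => ?_
      have h := hu.lintegral_le_of_cover hT hum
        (w := fun x => (L x + ε) * g x + (G K)ᶜ.indicator (u 1) x) (hLg.add hind) (K + 1) (by
          filter_upwards [hLT] with x hx
          by_cases hxG : x ∈ G K
          · obtain ⟨n, h1, h2, h3⟩ := hxG
            refine ⟨n, h1, h2, h3.trans ?_⟩
            unfold birkhoffSum
            rw [Finset.mul_sum]
            refine Finset.sum_le_sum fun i _ => le_trans ?_ le_self_add
            gcongr
            exact hx i
          · refine ⟨1, le_rfl, by omega, ?_⟩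
            rw [birkhoffSum_one, Set.indicator_of_mem (Set.mem_compl hxG)]
            exact le_add_self) hn
      rw [lintegral_add_left hLg] at h
      simp only [add_mul] at h
      have hLg' : Measurable fun x => L x * g x := hLm.mul hg
      rwa [lintegral_add_left hLg', lintegral_const_mul _ hg] at h
    have h3 := hbad.const_add (∫⁻ x, L x * g x ∂μ + ε * ∫⁻ x, g x ∂μ)
    rw [add_zero] at h3
    exact ge_of_tendsto' h3 hK
  have h3 := (ENNReal.Tendsto.mul_const (b := ∫⁻ x, g x ∂μ) tendsto_eps
    (Or.inr hgi)).const_add (∫⁻ x, L x * g x ∂μ)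
  rw [zero_mul, add_zero] at h3
  exact ge_of_tendsto' h3 key

/-! ### Conservativity, extended real integrals and truncation -/

/-- In a conservative system the Birkhoff sums of an everywhere positive function diverge: almost
every point with `g ≥ 1 / j` returns infinitely often to the set `{g ≥ 1 / j}`. -/
lemma tendsto_birkhoffSum_top (hT : Conservative T μ) {g : X → ℝ≥0∞} (hg : Measurable g)
    (hg0 : ∀ x, g x ≠ 0) : ∀ᵐ x ∂μ, Tendsto (fun n => birkhoffSum T g n x) atTop (𝓝 ⊤) := by
  have h : ∀ᵐ x ∂μ, ∀ j : ℕ, x ∈ {x | (j : ℝ≥0∞)⁻¹ ≤ g x} →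
      ∃ᶠ n in atTop, T^[n] x ∈ {x | (j : ℝ≥0∞)⁻¹ ≤ g x} :=
    ae_all_iff.2 fun j => hT.ae_mem_imp_frequently_image_mem
      (measurableSet_le measurable_const hg).nullMeasurableSet
  filter_upwards [h] with x hx
  obtain ⟨j, hj⟩ := ENNReal.exists_inv_nat_lt (hg0 x)
  have hinf := Nat.frequently_atTop_iff_infinite.1 (hx j hj.le)
  have htop : ∑' n, g (T^[n] x) = ⊤ := by
    by_contra hne
    exact hinf (ENNReal.finite_const_le_of_tsum_ne_top hne
      (ENNReal.inv_ne_zero.2 (ENNReal.natCast_ne_top j)))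
  rw [← htop]
  exact ENNReal.tendsto_nat_tsum _

/-- The integral of an extended real function, as the difference of the integrals of its positive
and negative parts, with Mathlib's convention `⊤ - ⊤ = ⊥` in `EReal`. -/
noncomputable def eint (ν : Measure X) (f : X → EReal) : EReal :=
  ((∫⁻ x, (f x).toENNReal ∂ν : ℝ≥0∞) : EReal) - ((∫⁻ x, (-(f x)).toENNReal ∂ν : ℝ≥0∞) : EReal)

lemma erealToENNReal_eq (x : EReal) : erealToENNReal x = x.toENNReal := by
  unfold erealToENNReal EReal.toENNReal
  split_ifs <;> rfl

lemma erealIntegral_eq (A : Set X) (f : X → EReal) :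
    erealIntegral μ A f = eint (μ.restrict A) f := by
  simp only [erealIntegral, eint, erealToENNReal_eq]

/-- `(y + c)⁺ + min (y⁻) c = y⁺ + c`. -/
lemma toENNReal_add_min (y : EReal) {c : ℝ} (hc : 0 ≤ c) :
    (y + (c : EReal)).toENNReal + min (-y).toENNReal (ENNReal.ofReal c)
      = y.toENNReal + ENNReal.ofReal c := by
  induction y with
  | bot => simp
  | top => simp
  | coe r =>
    rw [← EReal.coe_add, ← EReal.coe_neg]
    simp only [EReal.real_coe_toENNReal]
    rcases le_total 0 r with h | h
    · rw [ENNReal.ofReal_of_nonpos (by linarith : -r ≤ 0), ENNReal.ofReal_add h hc]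
      simp
    · rw [ENNReal.ofReal_of_nonpos h, zero_add]
      rcases le_total 0 (r + c) with h' | h'
      · rw [min_eq_left (ENNReal.ofReal_le_ofReal (by linarith)),
          ← ENNReal.ofReal_add h' (by linarith)]
        congr 1; ring
      · rw [min_eq_right (ENNReal.ofReal_le_ofReal (by linarith)), ENNReal.ofReal_of_nonpos h',
          zero_add]

lemma coe_sub_eq_coe_sub {P q p t : ℝ≥0∞} (h : P + q = p + t) (hp : p ≠ ⊤) (ht : t ≠ ⊤) :
    (P : EReal) - (t : EReal) = (p : EReal) - (q : EReal) := by
  have hfin : P + q ≠ ⊤ := h ▸ ENNReal.add_ne_top.2 ⟨hp, ht⟩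
  obtain ⟨hP, hq⟩ := ENNReal.add_ne_top.1 hfin
  have h' := congrArg ENNReal.toReal h
  rw [ENNReal.toReal_add hP hq, ENNReal.toReal_add hp ht] at h'
  rw [← EReal.coe_ennreal_toReal hP, ← EReal.coe_ennreal_toReal hp, ← EReal.coe_ennreal_toReal ht,
    ← EReal.coe_ennreal_toReal hq, ← EReal.coe_sub, ← EReal.coe_sub]
  congr 1
  linarith

/-- If `f⁺` and `γ > 0` are integrable, then `∫ (f + M γ)⁺ - M ∫ γ` bounds `∫ f` from above and
tends to it as `M → ∞`. It equals `∫ f⁺ - ∫ min (f⁻) (M γ)`, so this is monotone convergence. -/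
lemma eint_truncation {ν : Measure X} {f : X → EReal} (hf : Measurable f) {γ : X → ℝ}
    (hγ : Measurable γ) (hγ0 : ∀ x, 0 < γ x) (hfi : ∫⁻ x, (f x).toENNReal ∂ν ≠ ⊤)
    (hγi : ∫⁻ x, ENNReal.ofReal (γ x) ∂ν ≠ ⊤) :
    (∀ M : ℕ, eint ν f ≤ ((∫⁻ x, (f x + ((M * γ x : ℝ) : EReal)).toENNReal ∂ν : ℝ≥0∞) : EReal)
      - ((M * ∫⁻ x, ENNReal.ofReal (γ x) ∂ν : ℝ≥0∞) : EReal)) ∧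
    Tendsto (fun M : ℕ =>
      ((∫⁻ x, (f x + ((M * γ x : ℝ) : EReal)).toENNReal ∂ν : ℝ≥0∞) : EReal)
        - ((M * ∫⁻ x, ENNReal.ofReal (γ x) ∂ν : ℝ≥0∞) : EReal)) atTop (𝓝 (eint ν f)) := by
  set q : ℕ → X → ℝ≥0∞ := fun M x => min (-(f x)).toENNReal (M * ENNReal.ofReal (γ x)) with hq
  have hfn : Measurable fun x => (-(f x)).toENNReal := (Measurable.neg hf).ereal_toENNReal
  have hγm : Measurable fun x => ENNReal.ofReal (γ x) := hγ.ennreal_ofReal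
  have hqm : ∀ M, Measurable (q M) := fun M => hfn.min (hγm.const_mul _)
  have hofReal : ∀ (M : ℕ) x, ENNReal.ofReal (M * γ x) = M * ENNReal.ofReal (γ x) := by
    intro M x
    rw [ENNReal.ofReal_mul (Nat.cast_nonneg M), ENNReal.ofReal_natCast]
  have heq : ∀ M : ℕ, ((∫⁻ x, (f x + ((M * γ x : ℝ) : EReal)).toENNReal ∂ν : ℝ≥0∞) : EReal)
      - ((M * ∫⁻ x, ENNReal.ofReal (γ x) ∂ν : ℝ≥0∞) : EReal)
      = ((∫⁻ x, (f x).toENNReal ∂ν : ℝ≥0∞) : EReal) - ((∫⁻ x, q M x ∂ν : ℝ≥0∞) : EReal) := by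
    intro M
    refine coe_sub_eq_coe_sub ?_ hfi (ENNReal.mul_ne_top (ENNReal.natCast_ne_top M) hγi)
    rw [← lintegral_add_right _ (hqm M), ← lintegral_const_mul _ hγm,
      ← lintegral_add_left hf.ereal_toENNReal]
    refine lintegral_congr fun x => ?_
    have := toENNReal_add_min (f x) (c := M * γ x) (by have := hγ0 x; positivity)
    rwa [hofReal] at this
  simp only [heq]
  have hqlim : Tendsto (fun M => ∫⁻ x, q M x ∂ν) atTop (𝓝 (∫⁻ x, (-(f x)).toENNReal ∂ν)) := by
    refine lintegral_tendsto_of_tendsto_of_monotone (fun M => (hqm M).aemeasurable)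
      (ae_of_all _ fun x M M' h => ?_) (ae_of_all _ fun x => ?_)
    · simp only [hq]
      gcongr
    · have h1 : Tendsto (fun M : ℕ => (M : ℝ≥0∞) * ENNReal.ofReal (γ x)) atTop
          (𝓝 (⊤ * ENNReal.ofReal (γ x))) :=
        ENNReal.Tendsto.mul_const ENNReal.tendsto_nat_nhds_top (Or.inl (by simp))
      rw [ENNReal.top_mul (by simpa using hγ0 x)] at h1
      have h2 := (tendsto_const_nhds (x := (-(f x)).toENNReal)).min h1
      rwa [min_top_right] at h2
  refine ⟨fun M => ?_, ?_⟩
  · refine EReal.sub_le_sub le_rfl (EReal.coe_ennreal_le_coe_ennreal_iff.2 ?_)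
    exact lintegral_mono fun x => min_le_left _ _
  · unfold eint
    simp only [sub_eq_add_neg]
    have h1 : Tendsto (fun M => -((∫⁻ x, q M x ∂ν : ℝ≥0∞) : EReal)) atTop
        (𝓝 (-((∫⁻ x, (-(f x)).toENNReal ∂ν : ℝ≥0∞) : EReal))) :=
      (continuous_neg.tendsto _).comp ((continuous_coe_ennreal_ereal.tendsto _).comp hqlim)
    have hadd : ContinuousAt (fun p : EReal × EReal => p.1 + p.2)
        (((∫⁻ x, (f x).toENNReal ∂ν : ℝ≥0∞) : EReal),
          -((∫⁻ x, (-(f x)).toENNReal ∂ν : ℝ≥0∞) : EReal)) :=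
      EReal.continuousAt_add (Or.inl (by simpa using hfi)) (Or.inl (EReal.coe_ennreal_ne_bot _))
    exact hadd.tendsto.comp (tendsto_const_nhds.prodMk_nhds h1)

/-- Passage from the truncated quantities `U M n` and `V M` to the integrals `Ia n` of the process
and `Ih` of the limit, which are the limits of `U M n - M n c` and `V M - M c` as `M → ∞`. The
bounds `n V M ≤ U M n` and `limsup U M n / n ≤ V M` pass to the limit in `M`. -/
lemma tendsto_of_truncations {Ia : ℕ → EReal} {Ih : EReal} {U : ℕ → ℕ → ℝ≥0∞} {V : ℕ → ℝ≥0∞}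
    {c : ℝ≥0∞} (hc : c ≠ ⊤) (hU : ∀ M n, 1 ≤ n → U M n ≠ ⊤)
    (h1 : ∀ n, 1 ≤ n → ∀ M : ℕ, Ia n ≤ (U M n : EReal) - ((M * (n * c) : ℝ≥0∞) : EReal))
    (h2 : ∀ n, 1 ≤ n → Tendsto (fun M : ℕ => (U M n : EReal) - ((M * (n * c) : ℝ≥0∞) : EReal))
      atTop (𝓝 (Ia n)))
    (h3 : ∀ M : ℕ, Ih ≤ (V M : EReal) - ((M * c : ℝ≥0∞) : EReal))
    (h4 : Tendsto (fun M : ℕ => (V M : EReal) - ((M * c : ℝ≥0∞) : EReal)) atTop (𝓝 Ih))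
    (h5 : ∀ M n, 1 ≤ n → n * V M ≤ U M n)
    (h6 : ∀ M, limsup (fun n => U M n / n) atTop ≤ V M) :
    (∀ n : ℕ, 1 ≤ n → Ih ≤ Ia n / (n : EReal)) ∧
      Tendsto (fun n : ℕ => Ia n / (n : EReal)) atTop (𝓝 Ih) ∧ Ih < ⊤ := by
  have hV : ∀ M, V M ≠ ⊤ := fun M => by
    have := h5 M 1 le_rfl
    rw [Nat.cast_one, one_mul] at this
    exact ne_top_of_le_ne_top (hU M 1 le_rfl) this
  have hVr : ∀ M : ℕ, (V M : EReal) - ((M * c : ℝ≥0∞) : EReal)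
      = (((V M).toReal - M * c.toReal : ℝ) : EReal) := by
    intro M
    rw [← EReal.coe_ennreal_toReal (hV M),
      ← EReal.coe_ennreal_toReal (ENNReal.mul_ne_top (ENNReal.natCast_ne_top M) hc),
      ← EReal.coe_sub, ENNReal.toReal_mul, ENNReal.toReal_natCast]
  have hUr : ∀ M n : ℕ, 1 ≤ n → (U M n : EReal) - ((M * (n * c) : ℝ≥0∞) : EReal)
      = (((U M n).toReal - M * (n * c.toReal) : ℝ) : EReal) := by
    intro M n hn
    rw [← EReal.coe_ennreal_toReal (hU M n hn),
      ← EReal.coe_ennreal_toReal (ENNReal.mul_ne_top (ENNReal.natCast_ne_top M)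
        (ENNReal.mul_ne_top (ENNReal.natCast_ne_top n) hc)),
      ← EReal.coe_sub, ENNReal.toReal_mul, ENNReal.toReal_mul, ENNReal.toReal_natCast,
      ENNReal.toReal_natCast]
  have hcast : ∀ n : ℕ, (n : EReal) = ((n : ℝ) : EReal) := fun n => rfl
  have hlow : ∀ n : ℕ, 1 ≤ n → Ih ≤ Ia n / (n : EReal) := by
    intro n hn
    have hnpos : (0 : ℝ) < n := by exact_mod_cast hn
    rw [EReal.le_div_iff_mul_le (by rw [hcast]; exact_mod_cast hnpos)
      (by rw [hcast]; exact EReal.coe_ne_top _)]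
    refine ge_of_tendsto' (h2 n hn) fun M => ?_
    have h := h3 M
    rw [hVr] at h
    rw [hUr M n hn]
    have h' : Ih * (n : EReal) ≤ (((V M).toReal - M * c.toReal : ℝ) : EReal) * (n : EReal) :=
      mul_le_mul_of_nonneg_right h (by rw [hcast]; exact_mod_cast hnpos.le)
    refine h'.trans ?_
    rw [hcast, ← EReal.coe_mul, EReal.coe_le_coe_iff]
    have h5' := ENNReal.toReal_mono (hU M n hn) (h5 M n hn)
    rw [ENNReal.toReal_mul, ENNReal.toReal_natCast] at h5'
    nlinarith
  have hlim : ∀ M, Tendsto (fun n => U M n / n) atTop (𝓝 (V M)) := by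
    intro M
    refine tendsto_of_le_liminf_of_limsup_le ?_ (h6 M)
    refine le_liminf_of_le (by isBoundedDefault) ?_
    filter_upwards [eventually_ge_atTop 1] with n hn
    rw [ENNReal.le_div_iff_mul_le (Or.inl (by exact_mod_cast (by omega : n ≠ 0)))
      (Or.inl (ENNReal.natCast_ne_top n)), mul_comm]
    exact h5 M n hn
  have hup : limsup (fun n : ℕ => Ia n / (n : EReal)) atTop ≤ Ih := by
    refine ge_of_tendsto' h4 fun M => ?_
    rw [hVr]
    have h7 : Tendsto (fun n : ℕ => (((U M n / n).toReal - M * c.toReal : ℝ) : EReal)) atTop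
        (𝓝 (((V M).toReal - M * c.toReal : ℝ) : EReal)) :=
      (continuous_coe_real_ereal.tendsto _).comp
        (((ENNReal.tendsto_toReal (hV M)).comp (hlim M)).sub_const _)
    rw [← h7.limsup_eq]
    refine limsup_le_limsup ?_
    filter_upwards [eventually_ge_atTop 1] with n hn
    have hnpos : (0 : ℝ) < n := by exact_mod_cast hn
    have h := h1 n hn M
    rw [hUr M n hn] at h
    rw [EReal.div_le_iff_le_mul (by rw [hcast]; exact_mod_cast hnpos)
      (by rw [hcast]; exact EReal.coe_ne_top _), hcast, ← EReal.coe_mul]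
    refine h.trans_eq ?_
    rw [ENNReal.toReal_div, ENNReal.toReal_natCast]
    congr 1
    field_simp
  refine ⟨hlow, tendsto_of_le_liminf_of_limsup_le ?_ hup, ?_⟩
  · refine le_liminf_of_le (by isBoundedDefault) ?_
    filter_upwards [eventually_ge_atTop 1] with n hn using hlow n hn
  · refine (h3 0).trans_lt ?_
    rw [hVr]
    exact EReal.coe_lt_top _

/-! ### The truncated processes of an extended real subadditive process -/

/-- The truncated process `(a_n + M S_n γ)⁺`. -/
noncomputable def trunc (T : X → X) (γ : X → ℝ) (a : ℕ → X → EReal) (M n : ℕ) (x : X) : ℝ≥0∞ :=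
  (a n x + ((M * birkhoffSum T γ n x : ℝ) : EReal)).toENNReal

/-- The upper limit of the ratios `a_n / S_n γ`. -/
noncomputable def upper (T : X → X) (γ : X → ℝ) (a : ℕ → X → EReal) (x : X) : EReal :=
  limsup (fun n => a n x / ((birkhoffSum T γ n x : ℝ) : EReal)) atTop

/-- The lower limit of the ratios `a_n / S_n γ`. -/
noncomputable def lower (T : X → X) (γ : X → ℝ) (a : ℕ → X → EReal) (x : X) : EReal :=
  liminf (fun n => a n x / ((birkhoffSum T γ n x : ℝ) : EReal)) atTop

omit [MeasurableSpace X] in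
lemma birkhoffSum_pos {γ : X → ℝ} (hγ0 : ∀ x, 0 < γ x) {n : ℕ} (hn : 1 ≤ n) (x : X) :
    0 < birkhoffSum T γ n x :=
  Finset.sum_pos (fun _ _ => hγ0 _) ⟨0, by simp; omega⟩

omit [MeasurableSpace X] in
lemma birkhoffSum_ofReal {γ : X → ℝ} (hγ0 : ∀ x, 0 < γ x) (n : ℕ) (x : X) :
    birkhoffSum T (fun x => ENNReal.ofReal (γ x)) n x = ENNReal.ofReal (birkhoffSum T γ n x) :=
  (ENNReal.ofReal_sum_of_nonneg fun _ _ => (hγ0 _).le).symm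

lemma measurable_trunc (hT : Measurable T) {γ : X → ℝ} (hγ : Measurable γ) {a : ℕ → X → EReal}
    (ha : ∀ n, Measurable (a n)) (M n : ℕ) : Measurable (trunc T γ a M n) :=
  ((ha n).add ((measurable_birkhoffSum hT hγ n).const_mul _).coe_real_ereal).ereal_toENNReal

lemma measurable_ratio (hT : Measurable T) {γ : X → ℝ} (hγ : Measurable γ) {a : ℕ → X → EReal}
    (ha : ∀ n, Measurable (a n)) (n : ℕ) :
    Measurable fun x => a n x / ((birkhoffSum T γ n x : ℝ) : EReal) := by
  simp only [div_eq_mul_inv, ← EReal.coe_inv]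
  exact (ha n).mul (measurable_birkhoffSum hT hγ n).inv.coe_real_ereal

lemma measurable_upper (hT : Measurable T) {γ : X → ℝ} (hγ : Measurable γ) {a : ℕ → X → EReal}
    (ha : ∀ n, Measurable (a n)) : Measurable (upper T γ a) :=
  Measurable.limsup (measurable_ratio hT hγ ha)

lemma subaddAE_trunc {γ : X → ℝ} {a : ℕ → X → EReal}
    (hsub : ∀ n ≥ 1, ∀ m ≥ 1, ∀ᵐ x ∂μ, a (n + m) x ≤ a n x + a m (T^[n] x)) (M : ℕ) :
    SubaddAE T μ (trunc T γ a M) := by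
  intro n hn m hm
  filter_upwards [hsub n hn m hm] with x hx
  refine le_trans (EReal.toENNReal_le_toENNReal ?_) EReal.toENNReal_add_le
  rw [birkhoffSum_add, mul_add, EReal.coe_add]
  refine (add_le_add_left hx _).trans_eq ?_
  abel

lemma lintegral_trunc_one_ne_top {γ : X → ℝ} (hγ : Measurable γ) {a : ℕ → X → EReal}
    (ha1 : ∫⁻ x, (a 1 x).toENNReal ∂μ ≠ ⊤) (hγi : ∫⁻ x, ENNReal.ofReal (γ x) ∂μ ≠ ⊤) (M : ℕ) :
    ∫⁻ x, trunc T γ a M 1 x ∂μ ≠ ⊤ := by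
  have h : ∫⁻ x, trunc T γ a M 1 x ∂μ
      ≤ ∫⁻ x, ((a 1 x).toENNReal + M * ENNReal.ofReal (γ x)) ∂μ := by
    refine lintegral_mono fun x => EReal.toENNReal_add_le.trans ?_
    rw [birkhoffSum_one, EReal.real_coe_toENNReal, ENNReal.ofReal_mul (Nat.cast_nonneg M),
      ENNReal.ofReal_natCast]
  refine ne_top_of_le_ne_top ?_ h
  rw [lintegral_add_right _ (hγ.ennreal_ofReal.const_mul _),
    lintegral_const_mul _ hγ.ennreal_ofReal]
  exact ENNReal.add_ne_top.2 ⟨ha1, ENNReal.mul_ne_top (ENNReal.natCast_ne_top M) hγi⟩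

lemma toENNReal_div_ofReal (y : EReal) (M : ℕ) {s : ℝ} (hs : 0 < s) :
    (y + ((M * s : ℝ) : EReal)).toENNReal / ENNReal.ofReal s
      = (y / (s : EReal) + ((M : ℝ) : EReal)).toENNReal := by
  have hs' : (0 : EReal) < (s : EReal) := by exact_mod_cast hs
  induction y with
  | bot => simp [EReal.bot_div_of_pos_ne_top hs' (EReal.coe_ne_top s)]
  | top =>
    rw [EReal.top_div_of_pos_ne_top hs' (EReal.coe_ne_top s), EReal.top_add_coe,
      EReal.top_add_coe, EReal.toENNReal_top, ENNReal.top_div_of_ne_top ENNReal.ofReal_ne_top]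
  | coe r =>
    rw [← EReal.coe_div, ← EReal.coe_add, ← EReal.coe_add, EReal.real_coe_toENNReal,
      EReal.real_coe_toENNReal, ← ENNReal.ofReal_div_of_pos hs]
    congr 1
    field_simp

omit [MeasurableSpace X] in
lemma trunc_ratio {γ : X → ℝ} (hγ0 : ∀ x, 0 < γ x) (a : ℕ → X → EReal) (M : ℕ) {n : ℕ}
    (hn : 1 ≤ n) (x : X) :
    trunc T γ a M n x / birkhoffSum T (fun x => ENNReal.ofReal (γ x)) n x
      = (a n x / ((birkhoffSum T γ n x : ℝ) : EReal) + ((M : ℝ) : EReal)).toENNReal := by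
  rw [birkhoffSum_ofReal hγ0, trunc, toENNReal_div_ofReal _ _ (birkhoffSum_pos hγ0 hn x)]

lemma monotone_shift (M : ℕ) : Monotone fun y : EReal => (y + ((M : ℝ) : EReal)).toENNReal :=
  fun _ _ h => EReal.toENNReal_le_toENNReal (add_le_add_left h _)

lemma continuous_shift (M : ℕ) :
    Continuous fun y : EReal => (y + ((M : ℝ) : EReal)).toENNReal := by
  refine EReal.continuous_toENNReal.comp (continuous_iff_continuousAt.2 fun y => ?_)
  have hadd : ContinuousAt (fun p : EReal × EReal => p.1 + p.2) (y, ((M : ℝ) : EReal)) :=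
    EReal.continuousAt_add (Or.inr (EReal.coe_ne_bot _)) (Or.inr (EReal.coe_ne_top _))
  exact hadd.tendsto.comp (tendsto_id.prodMk_nhds tendsto_const_nhds)

omit [MeasurableSpace X] in
lemma limsup_trunc {γ : X → ℝ} (hγ0 : ∀ x, 0 < γ x) (a : ℕ → X → EReal) (M : ℕ) (x : X) :
    limsup (fun n => trunc T γ a M n x / birkhoffSum T (fun x => ENNReal.ofReal (γ x)) n x) atTop
      = (upper T γ a x + ((M : ℝ) : EReal)).toENNReal := by
  have := (monotone_shift M).map_limsup_of_continuousAt (F := atTop)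
    (fun n => a n x / ((birkhoffSum T γ n x : ℝ) : EReal)) (continuous_shift M).continuousAt
  refine Eq.trans (limsup_congr ?_) this.symm
  filter_upwards [eventually_ge_atTop 1] with n hn using trunc_ratio hγ0 a M hn x

omit [MeasurableSpace X] in
lemma liminf_trunc {γ : X → ℝ} (hγ0 : ∀ x, 0 < γ x) (a : ℕ → X → EReal) (M : ℕ) (x : X) :
    liminf (fun n => trunc T γ a M n x / birkhoffSum T (fun x => ENNReal.ofReal (γ x)) n x) atTop
      = (lower T γ a x + ((M : ℝ) : EReal)).toENNReal := by
  have := (monotone_shift M).map_liminf_of_continuousAt (F := atTop)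
    (fun n => a n x / ((birkhoffSum T γ n x : ℝ) : EReal)) (continuous_shift M).continuousAt
  refine Eq.trans (liminf_congr ?_) this.symm
  filter_upwards [eventually_ge_atTop 1] with n hn using trunc_ratio hγ0 a M hn x

/-- Extended reals `l ≤ h` with `(l + M)⁺ = (h + M)⁺` for all `M` are equal if `h < ⊤`; the latter
holds as soon as `h⁺ < ⊤`. -/
lemma eq_of_shift_eq {l h : EReal} (hle : l ≤ h)
    (heq : ∀ M : ℕ, (l + ((M : ℝ) : EReal)).toENNReal = (h + ((M : ℝ) : EReal)).toENNReal)
    (hfin : (h + ((0 : ℕ) : ℝ)).toENNReal < ⊤) : h < ⊤ ∧ l = h := by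
  have hh : h ≠ ⊤ := by
    rintro rfl
    simp at hfin
  refine ⟨hh.lt_top, hle.antisymm ?_⟩
  induction h with
  | bot => exact bot_le
  | top => exact absurd rfl hh
  | coe r =>
    obtain ⟨M, hM⟩ := exists_nat_gt (-r)
    have h1 := heq M
    rw [← EReal.coe_add, EReal.real_coe_toENNReal] at h1
    induction l with
    | bot =>
      simp at h1
      linarith
    | top => exact le_top
    | coe s =>
      rw [← EReal.coe_add, EReal.real_coe_toENNReal] at h1
      rw [EReal.coe_le_coe_iff]
      by_contra! hlt
      exact (((ENNReal.ofReal_lt_ofReal_iff (by linarith)).2 (by linarith : s + M < r + M)).ne h1)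

/-- The upper and lower limits of the ratios agree. For each truncation, the two bounds on
the integrals give `∫ (upper + M)⁺ γ ≤ ∫ (lower + M)⁺ γ`, where the left-hand side is finite. -/
lemma lower_eq_upper (hT : MeasurePreserving T μ μ) {γ : X → ℝ} (hγ : Measurable γ)
    (hγ0 : ∀ x, 0 < γ x) (hγi : ∫⁻ x, ENNReal.ofReal (γ x) ∂μ ≠ ⊤) {a : ℕ → X → EReal}
    (ha : ∀ n, Measurable (a n))
    (hsub : ∀ n ≥ 1, ∀ m ≥ 1, ∀ᵐ x ∂μ, a (n + m) x ≤ a n x + a m (T^[n] x))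
    (ha1 : ∫⁻ x, (a 1 x).toENNReal ∂μ ≠ ⊤)
    (hS : ∀ᵐ x ∂μ, Tendsto (fun n => birkhoffSum T (fun x => ENNReal.ofReal (γ x)) n x) atTop
      (𝓝 ⊤)) :
    ∀ᵐ x ∂μ, upper T γ a x < ⊤ ∧ lower T γ a x = upper T γ a x := by
  have hG := hγ.ennreal_ofReal
  have hG0 : ∀ x, ENNReal.ofReal (γ x) ≠ 0 := fun x => by simpa using hγ0 x
  have hlm : Measurable (lower T γ a) :=
    Measurable.liminf (measurable_ratio hT.measurable hγ ha)
  have hum := measurable_upper hT.measurable hγ ha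
  have hle : ∀ x, lower T γ a x ≤ upper T γ a x := fun x =>
    liminf_le_limsup (by isBoundedDefault) (by isBoundedDefault)
  have key : ∀ M : ℕ, ∀ᵐ x ∂μ, (upper T γ a x + ((M : ℝ) : EReal)).toENNReal < ⊤ ∧
      (lower T γ a x + ((M : ℝ) : EReal)).toENNReal
        = (upper T γ a x + ((M : ℝ) : EReal)).toENNReal := by
    intro M
    have hsubM := subaddAE_trunc (γ := γ) hsub M
    have hm := measurable_trunc hT.measurable hγ ha M
    have h1 := lintegral_trunc_one_ne_top (T := T) hγ ha1 hγi M
    have hup := fun n (hn : 1 ≤ n) => hsubM.lintegral_limsup_le hT hm h1 hG hG0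
      (fun x => ENNReal.ofReal_ne_top) hγi hS hn
    have hlo := hsubM.limsup_lintegral_le hT hm h1 hG hG0 (fun x => ENNReal.ofReal_ne_top) hγi hS
    simp only [limsup_trunc hγ0, liminf_trunc hγ0] at hup hlo
    set F := fun x => (upper T γ a x + ((M : ℝ) : EReal)).toENNReal * ENNReal.ofReal (γ x) with hF
    set L := fun x => (lower T γ a x + ((M : ℝ) : EReal)).toENNReal * ENNReal.ofReal (γ x) with hL
    have hFm : Measurable F := ((continuous_shift M).measurable.comp hum).mul hG
    have hFfin : ∫⁻ x, F x ∂μ ≠ ⊤ := by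
      have := hup 1 le_rfl
      rw [Nat.cast_one, one_mul] at this
      exact ne_top_of_le_ne_top h1 this
    have hLF : ∀ x, L x ≤ F x := fun x => mul_le_mul_left (monotone_shift M (hle x)) _
    have hFL : ∫⁻ x, F x ∂μ ≤ ∫⁻ x, L x ∂μ := by
      refine le_trans ?_ hlo
      refine le_limsup_of_frequently_le' (Eventually.frequently ?_)
      filter_upwards [eventually_ge_atTop 1] with n hn
      rw [ENNReal.le_div_iff_mul_le (Or.inl (by exact_mod_cast (by omega : n ≠ 0)))
        (Or.inl (ENNReal.natCast_ne_top n)), mul_comm]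
      exact hup n hn
    have hae := ae_eq_of_ae_le_of_lintegral_le (ae_of_all μ hLF)
      (ne_top_of_le_ne_top hFfin (lintegral_mono hLF)) hFm.aemeasurable hFL
    filter_upwards [hae, ae_lt_top hFm hFfin] with x hx hx'
    refine ⟨?_, (ENNReal.mul_left_inj (hG0 x) ENNReal.ofReal_ne_top).1 hx⟩
    by_contra htop
    simp only [hF, not_lt_top_iff.1 htop, ENNReal.top_mul (hG0 x)] at hx'
    exact lt_irrefl _ hx'
  filter_upwards [ae_all_iff.2 key] with x hx
  exact eq_of_shift_eq (hle x) (fun M => (hx M).2) (hx 0).1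

/-- The integrals converge, for any measure preserved by `T` for which the ratios converge. It is
applied to the restrictions of the given measure to invariant sets. -/
lemma tendsto_eint (hT : MeasurePreserving T μ μ) {γ : X → ℝ} (hγ : Measurable γ)
    (hγ0 : ∀ x, 0 < γ x) (hγi : ∫⁻ x, ENNReal.ofReal (γ x) ∂μ ≠ ⊤) {a : ℕ → X → EReal}
    (ha : ∀ n, Measurable (a n))
    (hsub : ∀ n ≥ 1, ∀ m ≥ 1, ∀ᵐ x ∂μ, a (n + m) x ≤ a n x + a m (T^[n] x))
    (ha1 : ∫⁻ x, (a 1 x).toENNReal ∂μ ≠ ⊤)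
    (hS : ∀ᵐ x ∂μ, Tendsto (fun n => birkhoffSum T (fun x => ENNReal.ofReal (γ x)) n x) atTop
      (𝓝 ⊤))
    (hlu : ∀ᵐ x ∂μ, lower T γ a x = upper T γ a x) :
    (∀ n : ℕ, 1 ≤ n → eint μ (fun x => upper T γ a x * (γ x : EReal)) ≤ eint μ (a n) / (n : EReal))
      ∧ Tendsto (fun n : ℕ => eint μ (a n) / (n : EReal)) atTop
        (𝓝 (eint μ (fun x => upper T γ a x * (γ x : EReal))))
      ∧ eint μ (fun x => upper T γ a x * (γ x : EReal)) < ⊤ := by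
  have hG := hγ.ennreal_ofReal
  have hG0 : ∀ x, ENNReal.ofReal (γ x) ≠ 0 := fun x => by simpa using hγ0 x
  have hum := measurable_upper hT.measurable hγ ha
  have hm := fun M => measurable_trunc hT.measurable hγ ha M
  have h1 := fun M => lintegral_trunc_one_ne_top (T := T) hγ ha1 hγi M
  have hsubM := fun M => subaddAE_trunc (γ := γ) hsub M
  have hU : ∀ M n, 1 ≤ n → ∫⁻ x, trunc T γ a M n x ∂μ ≠ ⊤ := fun M n hn =>
    ne_top_of_le_ne_top (ENNReal.mul_ne_top (ENNReal.natCast_ne_top n) (h1 M))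
      ((hsubM M).lintegral_le hT (hm M) hn)
  have h5 : ∀ M n : ℕ, 1 ≤ n →
      n * ∫⁻ x, (upper T γ a x + ((M : ℝ) : EReal)).toENNReal * ENNReal.ofReal (γ x) ∂μ
        ≤ ∫⁻ x, trunc T γ a M n x ∂μ := by
    intro M n hn
    have := (hsubM M).lintegral_limsup_le hT (hm M) (h1 M) hG hG0
      (fun x => ENNReal.ofReal_ne_top) hγi hS hn
    simpa only [limsup_trunc hγ0] using this
  have h6 : ∀ M : ℕ, limsup (fun n : ℕ => (∫⁻ x, trunc T γ a M n x ∂μ) / n) atTop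
      ≤ ∫⁻ x, (upper T γ a x + ((M : ℝ) : EReal)).toENNReal * ENNReal.ofReal (γ x) ∂μ := by
    intro M
    have := (hsubM M).limsup_lintegral_le hT (hm M) (h1 M) hG hG0
      (fun x => ENNReal.ofReal_ne_top) hγi hS
    simp only [liminf_trunc hγ0] at this
    refine this.trans_eq (lintegral_congr_ae ?_)
    filter_upwards [hlu] with x hx
    rw [hx]
  -- Both `a_n` and the limit are recovered from their truncations.
  have hint : ∀ n, ∫⁻ x, ENNReal.ofReal (birkhoffSum T γ n x) ∂μ
      = n * ∫⁻ x, ENNReal.ofReal (γ x) ∂μ := by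
    intro n
    rw [← lintegral_birkhoffSum hT hG]
    exact lintegral_congr fun x => (birkhoffSum_ofReal hγ0 n x).symm
  have htr := fun (n : ℕ) (hn : 1 ≤ n) =>
    eint_truncation (ν := μ) (ha n) (measurable_birkhoffSum hT.measurable hγ n)
      (birkhoffSum_pos hγ0 hn) (by simpa [trunc] using hU 0 n hn)
      (by rw [hint]; exact ENNReal.mul_ne_top (ENNReal.natCast_ne_top n) hγi)
  have hshift : ∀ (M : ℕ) x,
      (upper T γ a x * (γ x : EReal) + ((M * γ x : ℝ) : EReal)).toENNReal
        = (upper T γ a x + ((M : ℝ) : EReal)).toENNReal * ENNReal.ofReal (γ x) := by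
    intro M x
    have hpos : (0 : EReal) ≤ (γ x : EReal) := by exact_mod_cast (hγ0 x).le
    rw [← EReal.real_coe_toENNReal, ← EReal.toENNReal_mul' hpos, EReal.coe_mul,
      EReal.right_distrib_of_nonneg_of_ne_top hpos (EReal.coe_ne_top _)]
  have htrh := eint_truncation (ν := μ) (f := fun x => upper T γ a x * (γ x : EReal))
    (hum.mul hγ.coe_real_ereal) hγ hγ0
    (by
      have h := h5 0 1 le_rfl
      rw [Nat.cast_one, one_mul] at h
      refine ne_top_of_le_ne_top (hU 0 1 le_rfl) (le_trans (le_of_eq ?_) h)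
      refine lintegral_congr fun x => ?_
      rw [← hshift]
      simp) hγi
  simp only [hshift] at htrh
  simp only [hint] at htr
  exact tendsto_of_truncations (U := fun M n => ∫⁻ x, trunc T γ a M n x ∂μ)
    (V := fun M => ∫⁻ x, (upper T γ a x + ((M : ℝ) : EReal)).toENNReal * ENNReal.ofReal (γ x) ∂μ)
    hγi hU (fun n hn => (htr n hn).1) (fun n hn => (htr n hn).2) htrh.1 htrh.2 h5 h6

/-! ### Recurrence, and changes on null sets -/

lemma conservative (hT : MeasurePreserving T μ μ) (hcons : IsConservative T μ) :
    Conservative T μ := by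
  refine ⟨hT.quasiMeasurePreserving, fun s hs hs0 => ?_⟩
  obtain ⟨n, hn, hpos⟩ := hcons s hs (pos_iff_ne_zero.2 hs0)
  obtain ⟨x, hxs, hxn⟩ := nonempty_of_measure_ne_zero hpos.ne'
  exact ⟨x, hxs, n, by omega, hxn⟩

/-- An almost everywhere positive integrable function agrees almost everywhere with a measurable,
everywhere positive one. -/
lemma exists_pos_version {g : X → ℝ}
    (hg : Integrable g μ) (hgpos : ∀ᵐ x ∂μ, 0 < g x) :
    ∃ γ : X → ℝ, Measurable γ ∧ (∀ x, 0 < γ x) ∧ (∀ᵐ x ∂μ, g x = γ x) ∧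
      ∫⁻ x, ENNReal.ofReal (γ x) ∂μ ≠ ⊤ := by
  have hm := hg.aestronglyMeasurable.stronglyMeasurable_mk.measurable
  set g₀ := hg.aestronglyMeasurable.mk g with hg₀
  refine ⟨fun x => if 0 < g₀ x then g₀ x else 1,
    Measurable.ite (measurableSet_lt measurable_const hm) hm measurable_const, fun x => ?_, ?_, ?_⟩
  · dsimp only
    split_ifs with h
    exacts [h, one_pos]
  · filter_upwards [hg.aestronglyMeasurable.ae_eq_mk, hgpos] with x hx hpos
    rw [← hg₀] at hx
    rw [if_pos (hx ▸ hpos), hx]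
  · have hfin : ∫⁻ x, ENNReal.ofReal (g x) ∂μ ≠ ⊤ := hg.lintegral_lt_top.ne
    convert hfin using 1
    refine lintegral_congr_ae ?_
    filter_upwards [hg.aestronglyMeasurable.ae_eq_mk, hgpos] with x hx hpos
    rw [← hg₀] at hx
    rw [if_pos (hx ▸ hpos), hx]

lemma eint_congr {ν : Measure X} {f₁ f₂ : X → EReal}
    (h : ∀ᵐ x ∂ν, f₁ x = f₂ x) : eint ν f₁ = eint ν f₂ := by
  have h1 : ∫⁻ x, (f₁ x).toENNReal ∂ν = ∫⁻ x, (f₂ x).toENNReal ∂ν :=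
    lintegral_congr_ae (by filter_upwards [h] with x hx; rw [hx])
  have h2 : ∫⁻ x, (-(f₁ x)).toENNReal ∂ν = ∫⁻ x, (-(f₂ x)).toENNReal ∂ν :=
    lintegral_congr_ae (by filter_upwards [h] with x hx; rw [hx])
  rw [eint, eint, h1, h2]

end KingmanRatio

/-- A Kingman ratio ergodic theorem on a σ-finite measure space. -/
theorem kingman_ratio_ergodic {X : Type*} [MeasurableSpace X] (μ : Measure X) [SigmaFinite μ]
    (T : X → X) (hT : MeasurePreserving T μ μ) (hcons : IsConservative T μ)
    (a : ℕ → X → EReal) (hmeas : ∀ n, Measurable (a n))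
    (hsub : ∀ n ≥ 1, ∀ m ≥ 1, ∀ᵐ x ∂μ, a (n + m) x ≤ a n x + a m (T^[n] x))
    (ha1 : ∫⁻ x, erealToENNReal (a 1 x) ∂μ < ⊤)
    (g : X → ℝ) (hg : Integrable g μ) (hgpos : ∀ᵐ x ∂μ, 0 < g x) :
    ∃ h : X → EReal,
      (∀ᵐ x ∂μ, h x < ⊤) ∧
      (∀ᵐ x ∂μ,
        Tendsto (fun n => a n x / ((birkhoff T g n x : ℝ) : EReal)) atTop (𝓝 (h x))) ∧
      ∀ A : Set X, MeasurableSet A → T ⁻¹' A = A →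
        (⨅ n : ℕ, erealIntegral μ A (a (n + 1)) / (((n : ℕ) + 1 : ℕ) : EReal))
            = erealIntegral μ A (fun x => h x * ((g x : ℝ) : EReal)) ∧
        Tendsto (fun n : ℕ => erealIntegral μ A (a n) / ((n : ℕ) : EReal)) atTop
            (𝓝 (erealIntegral μ A (fun x => h x * ((g x : ℝ) : EReal)))) ∧
        erealIntegral μ A (fun x => h x * ((g x : ℝ) : EReal)) < ⊤ := by
  obtain ⟨γ, hγ, hγ0, hgγ, hγi⟩ := KingmanRatio.exists_pos_version hg hgpos
  simp only [KingmanRatio.erealToENNReal_eq] at ha1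
  have hS := KingmanRatio.tendsto_birkhoffSum_top (KingmanRatio.conservative hT hcons)
    hγ.ennreal_ofReal (fun x => by simpa using hγ0 x)
  have hae := KingmanRatio.lower_eq_upper hT hγ hγ0 hγi hmeas hsub ha1.ne hS
  refine ⟨KingmanRatio.upper T γ a, hae.mono fun x hx => hx.1, ?_, fun A hA hAT => ?_⟩
  · filter_upwards [hae, KingmanRatio.ae_orbit hT hgγ] with x hx hgx
    have hb : ∀ n, birkhoff T g n x = birkhoffSum T γ n x := fun n =>
      Finset.sum_congr rfl fun k _ => hgx k
    simp only [hb]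
    exact tendsto_of_liminf_eq_limsup hx.2 rfl
  -- An invariant `A` gives a system of the same kind for the restriction of `μ` to `A`.
  · have hTA : MeasurePreserving T (μ.restrict A) (μ.restrict A) := by
      have := hT.restrict_preimage hA
      rwa [hAT] at this
    obtain ⟨hlow, hlim, htop⟩ := KingmanRatio.tendsto_eint hTA hγ hγ0
      (ne_top_of_le_ne_top hγi (setLIntegral_le_lintegral A _)) hmeas
      (fun n hn m hm => ae_restrict_of_ae (hsub n hn m hm))
      (ne_top_of_le_ne_top ha1.ne (setLIntegral_le_lintegral A _))
      (ae_restrict_of_ae hS) (ae_restrict_of_ae (hae.mono fun x hx => hx.2))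
    have hI : erealIntegral μ A (fun x => KingmanRatio.upper T γ a x * ((g x : ℝ) : EReal))
        = KingmanRatio.eint (μ.restrict A)
          (fun x => KingmanRatio.upper T γ a x * (γ x : EReal)) := by
      rw [KingmanRatio.erealIntegral_eq]
      refine KingmanRatio.eint_congr (ae_restrict_of_ae ?_)
      filter_upwards [hgγ] with x hx
      rw [hx]
    simp only [hI, KingmanRatio.erealIntegral_eq A (a _)]
    refine ⟨le_antisymm ?_ (le_iInf fun n => hlow (n + 1) (by omega)), hlim, htop⟩
    exact ge_of_tendsto' ((tendsto_add_atTop_iff_nat 1).2 hlim) fun n => iInf_le _ n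
end

section
/- Let (X, ℬ, μ, T) be a conservative, measure-preserving transformation of a σ-finite measure space. Let (a_n)_{n≥1} be a sequence of measurable functions that is superadditive with respect to T, with a_1 ≥ 0 μ-a.e. Let g ∈ L¹(X, μ) with g > 0 μ-a.e. Then the limit h := lim_{n→∞} a_n / S_n g exists μ-almost everywhere with values in [0,+∞], and for every measurable T-invariant set A: sup_{n≥1} (1/n)∫_A a_n dμ = lim_{n→∞} (1/n)∫_A a_n dμ = ∫_A h·g dμ, an element of [0,+∞]. -/
/-!
Everything is done for `[0, ∞]`-valued functions: `α n` is `a n` (a.e. nonnegative for `n ≥ 1`), `γ`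
is a measurable version of `g`, and `S_n γ` its Birkhoff sums. By conservativity, `S_n γ → ∞` a.e.,
and a function that does not increase along orbits is a.e. invariant. In particular
`h = limsup α_n / S_n γ` (`upper`) is invariant.

*Upper bound* (`lintegral_upper_le_rate`). Let `φ` be invariant with `φ < h` where `φ ≠ 0`. Almost
every orbit can be cut greedily into blocks of length `N` with `φ S_N γ ≤ α_N`. Restricting to
blocks of length at most `M` loses the weight of a set that shrinks to the empty set as `M → ∞`
and at most `M` points at the end of the orbit segment. Superadditivity, integration and `φ ↑ h`
then give `∫ h γ ≤ sup_n (1/n) ∫ α_n`.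

*Lower bound.* Applied to `n ↦ S_n (γ ∘ T)`, the upper bound yields `S_{n+1} γ / S_n γ → 1`
(`step_ratio`). Applied to `f` and to `K γ - f` for `0 ≤ f ≤ K γ`, it yields the additive ratio
theorem for `f` (`hopf`). Averaging superadditivity over the starting point gives
`S_n (α_m / m) ≤ α_{n+m}`, so the additive limits of the truncations `min (α_m / m) (K γ)` bound
`liminf α_n / S_n γ` from below. Their supremum `H` (`lowerBd`) is invariant, `H ≤ h`, and
`sup_n (1/n) ∫ α_n ≤ ∫ H γ` (`rate_le_lintegral_lowerBd`).

Both bounds hold on every invariant set. On `{H ≤ c}` the integral of `H γ` is finite, so `H = h`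
there; where `H = ∞`, also `h = ∞`. Thus `H = liminf = limsup = h` a.e., and the two bounds give the
integral formula. Convergence of `(1/n) ∫ α_n` is Fekete's lemma.
-/

open MeasureTheory Filter Topology

open scoped ENNReal NNReal

namespace SuperRatio

/-! ### Orbits, invariance and the weight -/

variable {X : Type*} [MeasurableSpace X] {μ : Measure X} {T : X → X}

theorem ae_orbit (hT : MeasurePreserving T μ μ) {p : X → Prop} (h : ∀ᵐ x ∂μ, p x) :
    ∀ᵐ x ∂μ, ∀ j, p (T^[j] x) :=
  ae_all_iff.2 fun j => (hT.iterate j).quasiMeasurePreserving.ae h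

theorem measurable_birkhoffSum (hT : Measurable T) {f : X → ℝ≥0∞} (hf : Measurable f) (n : ℕ) :
    Measurable (birkhoffSum T f n) := by
  unfold birkhoffSum
  exact Finset.measurable_sum _ fun k _ => hf.comp (hT.iterate k)

theorem lintegral_birkhoffSum (hT : MeasurePreserving T μ μ) {f : X → ℝ≥0∞} (hf : Measurable f)
    (n : ℕ) : ∫⁻ x, birkhoffSum T f n x ∂μ = n * ∫⁻ x, f x ∂μ := by
  unfold birkhoffSum
  rw [lintegral_finsetSum (f := fun k x => f (T^[k] x)) _
    fun k _ => hf.comp (hT.iterate k).measurable]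
  simp [fun k => (hT.iterate k).lintegral_comp hf]

/-- Superadditivity of a `[0, ∞]`-valued sequence. The index `0` is included, which amounts to
`α 0 = 0` for finite functions and makes the sequence nondecreasing without side conditions. -/
def Superadd (T : X → X) (μ : Measure X) (α : ℕ → X → ℝ≥0∞) : Prop :=
  ∀ n m, ∀ᵐ x ∂μ, α n x + α m (T^[n] x) ≤ α (n + m) x

theorem Superadd.orbit {α : ℕ → X → ℝ≥0∞} (h : Superadd T μ α) (hT : MeasurePreserving T μ μ) :
    ∀ᵐ x ∂μ, ∀ j n m, α n (T^[j] x) + α m (T^[n] (T^[j] x)) ≤ α (n + m) (T^[j] x) :=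
  ae_orbit hT (p := fun x => ∀ n m, α n x + α m (T^[n] x) ≤ α (n + m) x)
    (ae_all_iff.2 fun n => ae_all_iff.2 fun m => h n m)

theorem superadd_birkhoffSum (f : X → ℝ≥0∞) : Superadd T μ (fun n => birkhoffSum T f n) :=
  fun n m => ae_of_all _ fun x => (birkhoffSum_add T f n m x).ge

/-- A function that does not increase along orbits is invariant: for a rational level `q`, the set
`{f ∘ T ≤ q < f}` never returns to itself, so conservativity makes it null. -/
theorem ae_invariant_of_le (hT : MeasurePreserving T μ μ) (hcons : IsConservative T μ)
    {f : X → ℝ≥0∞} (hf : Measurable f) (hle : ∀ᵐ x ∂μ, f (T x) ≤ f x) :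
    ∀ᵐ x ∂μ, f (T x) = f x := by
  have key : ∀ q : ℚ, ∀ᵐ x ∂μ,
      ¬ (f (T x) ≤ ((q : ℝ).toNNReal : ℝ≥0∞) ∧ ((q : ℝ).toNNReal : ℝ≥0∞) < f x) := by
    intro q
    rw [ae_iff]
    simp only [not_not]
    by_contra hpos
    set W := {x | f (T x) ≤ ((q : ℝ).toNNReal : ℝ≥0∞) ∧ ((q : ℝ).toNNReal : ℝ≥0∞) < f x} with hW
    have hWm : MeasurableSet W :=
      (measurableSet_le (hf.comp hT.measurable) measurable_const).inter
        (measurableSet_lt measurable_const hf)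
    obtain ⟨n, hn, hn'⟩ := hcons W hWm (pos_iff_ne_zero.2 hpos)
    refine hn'.ne' (measure_mono_null ?_ (ae_iff.1 (ae_orbit hT hle)))
    rintro x ⟨hx, hx'⟩
    simp only [Set.mem_ofPred_eq]
    intro hall
    have : ∀ k, f (T^[k+1] x) ≤ f (T x) := by
      intro k
      induction k with
      | zero => simp
      | succ k ih =>
        refine le_trans ?_ ih
        rw [Function.iterate_succ_apply' T (k+1)]
        exact hall (k+1)
    obtain ⟨k, rfl⟩ := Nat.exists_eq_add_of_le' hn
    exact absurd (hx'.2.trans_le ((this k).trans hx.1)) (lt_irrefl _)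
  filter_upwards [hle, ae_all_iff.2 key] with x hx hk
  refine le_antisymm hx (not_lt.1 fun hlt => ?_)
  obtain ⟨q, -, h1, h2⟩ := ENNReal.lt_iff_exists_rat_btwn.1 hlt
  exact hk q ⟨h1.le, h2⟩

/-- The total orbit sum `F` satisfies `F = γ + F ∘ T`, hence is invariant, hence infinite. -/
theorem birkhoffSum_tendsto_top (hT : MeasurePreserving T μ μ) (hcons : IsConservative T μ)
    {γ : X → ℝ≥0∞} (hγ : Measurable γ) (hpos : ∀ᵐ x ∂μ, γ x ≠ 0) :
    ∀ᵐ x ∂μ, Tendsto (fun n => birkhoffSum T γ n x) atTop (𝓝 ∞) := by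
  set F : X → ℝ≥0∞ := fun x => ∑' k, γ (T^[k] x) with hF
  have hsucc : ∀ x, F x = γ x + F (T x) := by
    intro x
    simp only [hF]
    rw [tsum_eq_zero_add' ENNReal.summable]
    simp
  have hinv := ae_invariant_of_le hT hcons (f := F)
    (Measurable.tsum fun k => hγ.comp (hT.measurable.iterate k))
    (ae_of_all _ fun x => by rw [hsucc x]; exact le_add_self)
  filter_upwards [hinv, hpos] with x hx hp
  have htop : F x = ∞ := by
    by_contra hne
    have h1 := hsucc x
    rw [hx] at h1
    exact (ENNReal.lt_add_right hne hp).ne (by rw [add_comm]; exact h1)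
  rw [← htop]
  exact ENNReal.tendsto_nat_tsum _

/-- The standing assumptions on the weight: measurable, positive, finite, integrable. -/
structure Weight (μ : Measure X) (γ : X → ℝ≥0∞) : Prop where
  meas : Measurable γ
  pos : ∀ᵐ x ∂μ, γ x ≠ 0
  fin : ∀ᵐ x ∂μ, γ x ≠ ∞
  int : ∫⁻ x, γ x ∂μ ≠ ∞

theorem Weight.birkhoff_ne (hT : MeasurePreserving T μ μ) {γ : X → ℝ≥0∞} (hγ : Weight μ γ) :
    ∀ᵐ x ∂μ, ∀ j, (∀ n, birkhoffSum T γ n (T^[j] x) ≠ ∞) ∧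
      ∀ n, 1 ≤ n → birkhoffSum T γ n (T^[j] x) ≠ 0 := by
  refine ae_orbit hT (p := fun x => (∀ n, birkhoffSum T γ n x ≠ ∞) ∧
      ∀ n, 1 ≤ n → birkhoffSum T γ n x ≠ 0) ?_
  filter_upwards [ae_orbit hT hγ.fin, hγ.pos] with x h1 h2
  refine ⟨fun n => ?_, fun n hn => ?_⟩
  · simp only [birkhoffSum]
    exact ENNReal.sum_ne_top.2 fun k _ => h1 k
  · obtain ⟨k, rfl⟩ := Nat.exists_eq_add_of_le' hn
    rw [birkhoffSum_succ']
    simp [h2]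

/-- Since `S_{n+1} γ = γ + S_n γ ∘ T` and `S_n γ → ∞`, dropping the first point of an orbit does
not affect ratios in the limit. -/
theorem shift_ratio (hT : MeasurePreserving T μ μ) (hcons : IsConservative T μ)
    {γ : X → ℝ≥0∞} (hγ : Weight μ γ) :
    ∀ᵐ x ∂μ, Tendsto (fun n => birkhoffSum T γ (n + 1) x / birkhoffSum T γ n (T x)) atTop
      (𝓝 1) := by
  have htop := hT.quasiMeasurePreserving.ae (birkhoffSum_tendsto_top hT hcons hγ.meas hγ.pos)
  filter_upwards [htop, hγ.fin, hγ.birkhoff_ne hT] with x h1 h2 h3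
  have : Tendsto (fun n => γ x / birkhoffSum T γ n (T x) + 1) atTop (𝓝 (γ x / ∞ + 1)) :=
    (ENNReal.Tendsto.const_div h1 (Or.inr h2)).add tendsto_const_nhds
  rw [ENNReal.div_top, zero_add] at this
  refine this.congr' ?_
  filter_upwards [eventually_ge_atTop 1] with n hn
  have h0 : birkhoffSum T γ n (T x) ≠ 0 := (h3 1).2 n hn
  have hfin0 : birkhoffSum T γ n (T x) ≠ ∞ := (h3 1).1 n
  rw [birkhoffSum_succ', ENNReal.add_div, ENNReal.div_self h0 hfin0]

/-- The upper limit of `α_n / S_n γ`. -/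
noncomputable def upper (T : X → X) (γ : X → ℝ≥0∞) (α : ℕ → X → ℝ≥0∞) (x : X) : ℝ≥0∞ :=
  limsup (fun n => α n x / birkhoffSum T γ n x) atTop

theorem measurable_upper (hT : Measurable T) {γ : X → ℝ≥0∞} (hγ : Measurable γ)
    {α : ℕ → X → ℝ≥0∞} (hα : ∀ n, Measurable (α n)) : Measurable (upper T γ α) :=
  Measurable.limsup fun n => (hα n).div (measurable_birkhoffSum hT hγ n)

theorem limsup_mul_le_of_tendsto_one {u v : ℕ → ℝ≥0∞} (hv : Tendsto v atTop (𝓝 1)) :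
    limsup (fun n => u n * v n) atTop ≤ limsup u atTop := by
  have h := ENNReal.limsup_mul_le' (f := atTop) (u := u) (v := v)
    (Or.inr (by rw [hv.limsup_eq]; simp)) (Or.inr (by rw [hv.limsup_eq]; simp))
  rw [hv.limsup_eq, mul_one] at h
  exact h

/-- Shifting by `T` can only decrease the upper limit: `α_n ∘ T ≤ α_{n+1}`, and the denominators
`S_n γ ∘ T` and `S_{n+1} γ` are asymptotically equal. -/
theorem upper_invariant (hT : MeasurePreserving T μ μ) (hcons : IsConservative T μ)
    {γ : X → ℝ≥0∞} (hγ : Weight μ γ) {α : ℕ → X → ℝ≥0∞} (hα : ∀ n, Measurable (α n))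
    (hs : Superadd T μ α) : ∀ᵐ x ∂μ, upper T γ α (T x) = upper T γ α x := by
  refine ae_invariant_of_le hT hcons (measurable_upper hT.measurable hγ.meas hα) ?_
  filter_upwards [shift_ratio hT hcons hγ, hγ.birkhoff_ne hT, hs.orbit hT] with x h1 h2 h3
  unfold upper
  calc limsup (fun n => α n (T x) / birkhoffSum T γ n (T x)) atTop
      ≤ limsup (fun n => α (n + 1) x / birkhoffSum T γ (n + 1) x *
          (birkhoffSum T γ (n + 1) x / birkhoffSum T γ n (T x))) atTop := by
        refine limsup_le_limsup (Eventually.of_forall fun n => ?_)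
        beta_reduce
        have h0 : birkhoffSum T γ (n + 1) x ≠ 0 := (h2 0).2 _ (by omega)
        have hfin0 : birkhoffSum T γ (n + 1) x ≠ ∞ := (h2 0).1 _
        rw [← mul_div_assoc, ENNReal.div_mul_cancel h0 hfin0]
        gcongr
        have := h3 0 1 n
        rw [add_comm n 1]
        exact le_trans le_add_self this
    _ ≤ limsup (fun n => α (n + 1) x / birkhoffSum T γ (n + 1) x) atTop :=
        limsup_mul_le_of_tendsto_one h1
    _ = _ := limsup_nat_add (fun n => α n x / birkhoffSum T γ n x) 1

/-! ### The upper bound by a covering argument -/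

/-- Greedy decomposition of the orbit segment of length `n + M`: on `D` a block of length `N ≤ M`
is removed, on which `c S_N γ ≤ α_N`; off `D` a single point is removed. The remainder, which is
shorter than `M`, is discarded. -/
theorem greedy {Y : Type*} {T : Y → Y} {γ : Y → ℝ≥0∞} {α : ℕ → Y → ℝ≥0∞} {x : Y} {c : ℝ≥0∞}
    {D : Set Y} {M : ℕ}
    (hs : ∀ j n m, α n (T^[j] x) + α m (T^[n] (T^[j] x)) ≤ α (n + m) (T^[j] x))
    (hD : ∀ j, T^[j] x ∈ D →
      ∃ N, 1 ≤ N ∧ N ≤ M ∧ c * birkhoffSum T γ N (T^[j] x) ≤ α N (T^[j] x)) (n : ℕ) :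
    ∀ j, c * birkhoffSum T (D.indicator γ) n (T^[j] x) ≤ α (n + M) (T^[j] x) := by
  have hind : ∀ k y, birkhoffSum T (D.indicator γ) k y ≤ birkhoffSum T γ k y := fun k y =>
    Finset.sum_le_sum fun i _ => Set.indicator_le_self D γ _
  induction n using Nat.strong_induction_on with
  | _ n ih =>
    intro j
    rcases n with _ | n
    · simp
    by_cases hj : T^[j] x ∈ D
    · obtain ⟨N, hN1, hNM, hN⟩ := hD j hj
      by_cases hNn : N ≤ n + 1
      · obtain ⟨r, hr⟩ := Nat.exists_eq_add_of_le hNn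
        have h1 := ih r (by omega) (N + j)
        rw [Function.iterate_add_apply] at h1
        calc c * birkhoffSum T (D.indicator γ) (n + 1) (T^[j] x)
            = c * birkhoffSum T (D.indicator γ) N (T^[j] x)
              + c * birkhoffSum T (D.indicator γ) r (T^[N] (T^[j] x)) := by
              rw [hr, birkhoffSum_add, mul_add]
          _ ≤ α N (T^[j] x) + α (r + M) (T^[N] (T^[j] x)) := by
              gcongr
              exact (mul_le_mul_right (hind _ _) _).trans hN
          _ ≤ α (N + (r + M)) (T^[j] x) := hs j _ _
          _ = _ := by rw [hr, add_assoc]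
      · obtain ⟨r, hr⟩ := Nat.exists_eq_add_of_le (not_le.1 hNn).le
        obtain ⟨q, hq⟩ := Nat.exists_eq_add_of_le (show N ≤ n + 1 + M by omega)
        calc c * birkhoffSum T (D.indicator γ) (n + 1) (T^[j] x)
            ≤ c * birkhoffSum T γ N (T^[j] x) := by
              gcongr
              refine (hind _ _).trans ?_
              rw [hr, birkhoffSum_add T γ (n + 1) r]
              exact le_self_add
          _ ≤ α N (T^[j] x) := hN
          _ ≤ α (N + q) (T^[j] x) := le_self_add.trans (hs j N q)
          _ = _ := by rw [hq]
    · have h1 := ih n (by omega) (1 + j)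
      rw [Function.iterate_add_apply, Function.iterate_one] at h1
      rw [birkhoffSum_succ', Set.indicator_of_notMem hj, zero_add]
      refine h1.trans ?_
      have := hs j 1 (n + M)
      rw [show n + 1 + M = 1 + (n + M) by ring]
      exact le_add_self.trans this

/-- `sup_{n ≥ 1} (1/n) ∫ α_n`. -/
noncomputable def rate (μ : Measure X) (α : ℕ → X → ℝ≥0∞) : ℝ≥0∞ :=
  ⨆ n : ℕ, (∫⁻ x, α (n + 1) x ∂μ) / ((n + 1 : ℕ) : ℝ≥0∞)

theorem lintegral_le_rate (α : ℕ → X → ℝ≥0∞) {n : ℕ} (hn : 1 ≤ n) :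
    ∫⁻ x, α n x ∂μ ≤ n * rate μ α := by
  obtain ⟨k, rfl⟩ := Nat.exists_eq_add_of_le' hn
  have h : (∫⁻ x, α (k + 1) x ∂μ) / ((k + 1 : ℕ) : ℝ≥0∞) ≤ rate μ α :=
    le_iSup (fun k : ℕ => (∫⁻ x, α (k + 1) x ∂μ) / ((k + 1 : ℕ) : ℝ≥0∞)) k
  rw [mul_comm]
  exact (ENNReal.div_le_iff (by simp) (by simp)).1 h

theorem le_of_linear_growth {I S : ℝ≥0∞} (M : ℕ)
    (h : ∀ n : ℕ, 1 ≤ n → n * I ≤ ((n + M : ℕ) : ℝ≥0∞) * S) : I ≤ S := by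
  rcases eq_or_ne S ∞ with rfl | hS
  · exact le_top
  have ht : Tendsto (fun n : ℕ => (1 + M * ((n : ℝ≥0∞))⁻¹) * S) atTop
      (𝓝 ((1 + M * 0) * S)) :=
    ENNReal.Tendsto.mul_const (tendsto_const_nhds.add
      (ENNReal.Tendsto.const_mul ENNReal.tendsto_inv_nat_nhds_zero (Or.inr (by simp))))
      (Or.inr hS)
  rw [mul_zero, add_zero, one_mul] at ht
  refine ge_of_tendsto ht ?_
  filter_upwards [eventually_ge_atTop 1] with n hn
  have h0 : (n : ℝ≥0∞) ≠ 0 := by simp; omega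
  have h1 : (n : ℝ≥0∞) ≠ ∞ := by simp
  calc I = (n : ℝ≥0∞)⁻¹ * (n * I) := by
        rw [← mul_assoc, ENNReal.inv_mul_cancel h0 h1, one_mul]
    _ ≤ (n : ℝ≥0∞)⁻¹ * (((n + M : ℕ) : ℝ≥0∞) * S) := mul_le_mul_right (h n hn) _
    _ = ((n : ℝ≥0∞)⁻¹ * n + M * (n : ℝ≥0∞)⁻¹) * S := by push_cast; ring
    _ = _ := by rw [ENNReal.inv_mul_cancel h0 h1]

/-- Integrated form of `greedy`, for an invariant `φ` lying strictly below the upper limit wherever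
it does not vanish. `D M` is the set of points with a block of length at most `M`; these sets
exhaust `X`. -/
theorem lintegral_mul_le_rate (hT : MeasurePreserving T μ μ)
    {γ : X → ℝ≥0∞} (hγ : Measurable γ) {α : ℕ → X → ℝ≥0∞} (hα : ∀ n, Measurable (α n))
    (hs : Superadd T μ α) {φ : X → ℝ≥0∞} (hφ : Measurable φ) (hinv : ∀ᵐ x ∂μ, φ (T x) = φ x)
    (hlt : ∀ x, φ x < upper T γ α x ∨ φ x = 0) :
    ∫⁻ x, φ x * γ x ∂μ ≤ rate μ α := by
  set E : ℕ → Set X := fun n => {x | φ x * birkhoffSum T γ n x ≤ α n x} with hE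
  set D : ℕ → Set X := fun M => ⋃ n, ⋃ _ : 1 ≤ n ∧ n ≤ M, E n with hD
  have hDm : ∀ M, MeasurableSet (D M) := fun M => MeasurableSet.iUnion fun n =>
    MeasurableSet.iUnion fun _ =>
      measurableSet_le (hφ.mul (measurable_birkhoffSum hT.measurable hγ n)) (hα n)
  have hmem : ∀ M x, x ∈ D M ↔ ∃ n, 1 ≤ n ∧ n ≤ M ∧ φ x * birkhoffSum T γ n x ≤ α n x := by
    intro M x
    simp [hD, hE, and_assoc]
  have hDmono : Monotone D := by
    intro M M' h x hx
    rw [hmem] at hx ⊢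
    obtain ⟨n, h1, h2, h3⟩ := hx
    exact ⟨n, h1, h2.trans h, h3⟩
  have hDall : ∀ x, ∃ M, x ∈ D M := by
    intro x
    rcases hlt x with h | h
    · have hf := (frequently_lt_of_lt_limsup (by isBoundedDefault) h).and_eventually
        (eventually_ge_atTop 1)
      obtain ⟨n, hn, hn1⟩ := hf.exists
      exact ⟨n, (hmem _ _).2 ⟨n, hn1, le_rfl, ENNReal.mul_le_of_le_div hn.le⟩⟩
    · exact ⟨1, (hmem _ _).2 ⟨1, le_rfl, le_rfl, by simp [h]⟩⟩
  have horb : ∀ᵐ x ∂μ, ∀ j, φ (T^[j] x) = φ x := by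
    filter_upwards [ae_orbit hT hinv] with x hx j
    induction j with
    | zero => rfl
    | succ j ih => rw [Function.iterate_succ_apply', hx j, ih]
  have hM : ∀ M, ∫⁻ x, φ x * (D M).indicator γ x ∂μ ≤ rate μ α := by
    intro M
    have hγM : Measurable ((D M).indicator γ) := hγ.indicator (hDm M)
    refine le_of_linear_growth M fun n hn => ?_
    calc (n : ℝ≥0∞) * ∫⁻ x, φ x * (D M).indicator γ x ∂μ
        = ∫⁻ x, birkhoffSum T (fun x => φ x * (D M).indicator γ x) n x ∂μ :=
          (lintegral_birkhoffSum hT (hφ.mul hγM) n).symm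
      _ ≤ ∫⁻ x, α (n + M) x ∂μ := by
          refine lintegral_mono_ae ?_
          filter_upwards [horb, hs.orbit hT] with x h1 h2
          have := greedy (γ := γ) (D := D M) (M := M) (c := φ x) h2 (fun j hj => by
            have := (hmem _ _).1 hj
            rwa [h1 j] at this) n 0
          refine le_trans (le_of_eq ?_) this
          simp only [birkhoffSum, Finset.mul_sum, h1, Function.iterate_zero, id]
      _ ≤ _ := lintegral_le_rate α (by omega)
  have hsup : ∀ x, φ x * γ x = ⨆ M, φ x * (D M).indicator γ x := by
    intro x
    refine le_antisymm ?_ (iSup_le fun M => by gcongr; exact Set.indicator_le_self _ _ _)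
    obtain ⟨M, hx⟩ := hDall x
    refine le_iSup_of_le M ?_
    rw [Set.indicator_of_mem hx]
  have hm : ∀ M, Measurable fun x => φ x * (D M).indicator γ x := fun M =>
    hφ.mul (hγ.indicator (hDm M))
  simp_rw [hsup]
  rw [lintegral_iSup hm]
  · exact iSup_le hM
  · intro M M' h x
    exact mul_le_mul_right (Set.indicator_le_indicator_of_subset (hDmono h) (by simp) x) _

/-- The upper half: `∫ (limsup α_n / S_n γ) γ ≤ sup_n (1/n) ∫ α_n`. It follows by applying
the previous bound to `φ = c · min (limsup) K` with `c ↑ 1` and `K ↑ ∞`. -/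
theorem lintegral_upper_le_rate (hT : MeasurePreserving T μ μ)
    {γ : X → ℝ≥0∞} (hγ : Measurable γ) {α : ℕ → X → ℝ≥0∞} (hα : ∀ n, Measurable (α n))
    (hs : Superadd T μ α) (hinv : ∀ᵐ x ∂μ, upper T γ α (T x) = upper T γ α x) :
    ∫⁻ x, upper T γ α x * γ x ∂μ ≤ rate μ α := by
  have hu : Measurable (upper T γ α) := measurable_upper hT.measurable hγ hα
  refine ENNReal.le_of_forall_lt_one_mul_le fun c hc => ?_
  have hmin : ∀ x, upper T γ α x = ⨆ K : ℕ, min (upper T γ α x) K := by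
    intro x
    rw [← inf_iSup_eq, ENNReal.iSup_natCast, inf_top_eq]
  have hmono : Monotone fun (K : ℕ) x => min (upper T γ α x) K * γ x := by
    intro K K' h x
    dsimp only
    gcongr
  have hm : ∀ K : ℕ, Measurable fun x => min (upper T γ α x) K * γ x := fun K =>
    (hu.min measurable_const).mul hγ
  have h1 : ∫⁻ x, upper T γ α x * γ x ∂μ
      = ⨆ K : ℕ, ∫⁻ x, min (upper T γ α x) K * γ x ∂μ := by
    rw [← lintegral_iSup hm hmono]
    refine lintegral_congr fun x => ?_
    rw [← ENNReal.iSup_mul, ← hmin x]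
  rw [h1, ENNReal.mul_iSup]
  refine iSup_le fun K => ?_
  rw [← lintegral_const_mul _ (hm K)]
  simp_rw [← mul_assoc]
  refine lintegral_mul_le_rate hT hγ hα hs ((hu.min measurable_const).const_mul c) ?_ ?_
  · filter_upwards [hinv] with x hx
    rw [hx]
  · intro x
    rcases eq_or_ne (min (upper T γ α x) (K : ℝ≥0∞)) 0 with h0 | h0
    · right; rw [h0, mul_zero]
    · left
      have hfin : min (upper T γ α x) (K : ℝ≥0∞) ≠ ∞ :=
        ((min_le_right _ _).trans_lt (by simp)).ne
      calc c * min (upper T γ α x) (K : ℝ≥0∞) < 1 * min (upper T γ α x) (K : ℝ≥0∞) :=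
            ENNReal.mul_lt_mul_left h0 hfin hc
        _ ≤ _ := by rw [one_mul]; exact min_le_left _ _

/-! ### Restriction to invariant sets -/

theorem mp_restrict (hT : MeasurePreserving T μ μ) {A : Set X} (hA : MeasurableSet A)
    (hinv : T ⁻¹' A =ᵐ[μ] A) : MeasurePreserving T (μ.restrict A) (μ.restrict A) := by
  have := hT.restrict_preimage hA
  rwa [Measure.restrict_congr_set hinv] at this

theorem conservative_restrict (hcons : IsConservative T μ) {A : Set X} (hA : MeasurableSet A) :
    IsConservative T (μ.restrict A) := by
  intro B hB hpos
  rw [Measure.restrict_apply hB] at hpos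
  obtain ⟨n, hn, h⟩ := hcons (B ∩ A) (hB.inter hA) hpos
  refine ⟨n, hn, lt_of_lt_of_le h ?_⟩
  rw [Measure.restrict_apply' hA]
  exact measure_mono fun x hx => ⟨⟨hx.1.1, hx.2.1⟩, hx.1.2⟩

theorem Weight.restrict {γ : X → ℝ≥0∞} (hγ : Weight μ γ) (A : Set X) :
    Weight (μ.restrict A) γ where
  meas := hγ.meas
  pos := ae_restrict_of_ae hγ.pos
  fin := ae_restrict_of_ae hγ.fin
  int := ((setLIntegral_le_lintegral A γ).trans_lt hγ.int.lt_top).ne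

theorem Superadd.restrict {α : ℕ → X → ℝ≥0∞} (h : Superadd T μ α) (A : Set X) :
    Superadd T (μ.restrict A) α := fun n m => ae_restrict_of_ae (h n m)

/-! ### The additive ratio theorem for functions dominated by the weight -/

theorem rate_birkhoffSum (hT : MeasurePreserving T μ μ) {f : X → ℝ≥0∞} (hf : Measurable f) :
    rate μ (fun n => birkhoffSum T f n) = ∫⁻ x, f x ∂μ := by
  unfold rate
  simp_rw [lintegral_birkhoffSum hT hf]
  have : ∀ n : ℕ, ((n + 1 : ℕ) : ℝ≥0∞) * (∫⁻ x, f x ∂μ) / ((n + 1 : ℕ) : ℝ≥0∞)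
      = ∫⁻ x, f x ∂μ := fun n =>
    by
    rw [mul_comm, ENNReal.mul_div_cancel_right (Nat.cast_ne_zero.2 n.succ_ne_zero)
      (ENNReal.natCast_ne_top _)]
  simp_rw [this]
  exact ciSup_const

theorem lintegral_upper_birkhoffSum_le (hT : MeasurePreserving T μ μ) (hcons : IsConservative T μ)
    {γ : X → ℝ≥0∞} (hγ : Weight μ γ) {f : X → ℝ≥0∞} (hf : Measurable f) :
    ∫⁻ x, upper T γ (fun n => birkhoffSum T f n) x * γ x ∂μ ≤ ∫⁻ x, f x ∂μ := by
  have hm := measurable_birkhoffSum hT.measurable hf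
  rw [← rate_birkhoffSum hT hf]
  exact lintegral_upper_le_rate hT hγ.meas hm (superadd_birkhoffSum f)
    (upper_invariant hT hcons hγ hm (superadd_birkhoffSum f))

/-- The Chacon–Ornstein lemma in ratio form. The upper limit of `S_n (γ ∘ T) / S_n γ` is at least
`1`, and its integral against `γ` is at most `∫ γ ∘ T = ∫ γ`; hence it equals `1`. -/
theorem step_ratio (hT : MeasurePreserving T μ μ) (hcons : IsConservative T μ)
    {γ : X → ℝ≥0∞} (hγ : Weight μ γ) :
    ∀ᵐ x ∂μ, Tendsto (fun n => birkhoffSum T γ (n + 1) x / birkhoffSum T γ n x) atTop (𝓝 1) := by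
  set U := upper T γ (fun n => birkhoffSum T (fun x => γ (T x)) n) with hU
  have hcomp : ∀ n x, birkhoffSum T (fun x => γ (T x)) n x = birkhoffSum T γ n (T x) := by
    intro n x
    simp only [birkhoffSum]
    refine Finset.sum_congr rfl fun k _ => ?_
    rw [← Function.iterate_succ_apply' T, Function.iterate_succ_apply]
  have hfac : ∀ᵐ x ∂μ, ∀ n, 1 ≤ n → birkhoffSum T γ (n + 1) x / birkhoffSum T γ n x
      = birkhoffSum T γ n (T x) / birkhoffSum T γ n x *
        (birkhoffSum T γ (n + 1) x / birkhoffSum T γ n (T x)) := by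
    filter_upwards [hγ.birkhoff_ne hT] with x h n hn
    have h0 : birkhoffSum T γ n (T x) ≠ 0 := (h 1).2 n hn
    have hfin0 : birkhoffSum T γ n (T x) ≠ ∞ := (h 1).1 n
    rw [mul_comm, ← mul_div_assoc, ENNReal.div_mul_cancel h0 hfin0]
  have hge : ∀ᵐ x ∂μ, ∀ n, 1 ≤ n → 1 ≤ birkhoffSum T γ (n + 1) x / birkhoffSum T γ n x := by
    filter_upwards [hγ.birkhoff_ne hT] with x h n hn
    rw [← ENNReal.div_self ((h 0).2 n hn) ((h 0).1 n)]
    simp only [Function.iterate_zero, id]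
    gcongr
    rw [birkhoffSum_succ]
    exact le_self_add
  have hlim : ∀ᵐ x ∂μ,
      limsup (fun n => birkhoffSum T γ (n + 1) x / birkhoffSum T γ n x) atTop ≤ U x := by
    filter_upwards [hfac, shift_ratio hT hcons hγ] with x h1 h2
    have h3 := limsup_mul_le_of_tendsto_one
      (u := fun n => birkhoffSum T γ n (T x) / birkhoffSum T γ n x) h2
    rw [hU]
    simp only [upper, hcomp]
    refine le_trans (le_of_eq (limsup_congr ?_)) h3
    filter_upwards [eventually_ge_atTop 1] with n hn using h1 n hn
  have hone : ∀ᵐ x ∂μ, 1 ≤ U x := by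
    filter_upwards [hge, hlim] with x h1 h2
    refine le_trans ?_ h2
    refine le_limsup_of_frequently_le (Eventually.frequently ?_) (by isBoundedDefault)
    filter_upwards [eventually_ge_atTop 1] with n hn using h1 n hn
  have hUm : Measurable U := measurable_upper hT.measurable hγ.meas
    (measurable_birkhoffSum hT.measurable (hγ.meas.comp hT.measurable))
  have hUint : ∫⁻ x, U x * γ x ∂μ ≤ ∫⁻ x, γ x ∂μ := by
    refine (lintegral_upper_birkhoffSum_le hT hcons hγ (hγ.meas.comp hT.measurable)).trans ?_
    exact (hT.lintegral_comp hγ.meas).le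
  have heq := ae_eq_of_ae_le_of_lintegral_le (f := γ) (g := fun x => U x * γ x)
    (by filter_upwards [hone] with x hx using le_mul_of_one_le_left' hx) hγ.int
    (hUm.mul hγ.meas).aemeasurable hUint
  filter_upwards [heq, hge, hlim, hγ.pos, hγ.fin] with x h1 h2 h3 h4 h5
  have hU1 : U x = 1 := by
    have : U x * γ x = 1 * γ x := by rw [one_mul]; exact h1.symm
    exact (ENNReal.mul_left_inj h4 h5).1 this
  rw [hU1] at h3
  refine tendsto_of_le_liminf_of_limsup_le ?_ h3
  refine le_liminf_of_le (by isBoundedDefault) ?_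
  filter_upwards [eventually_ge_atTop 1] with n hn using h2 n hn

theorem steps_ratio (hT : MeasurePreserving T μ μ) (hcons : IsConservative T μ)
    {γ : X → ℝ≥0∞} (hγ : Weight μ γ) (m : ℕ) :
    ∀ᵐ x ∂μ, Tendsto (fun n => birkhoffSum T γ n x / birkhoffSum T γ (n + m) x) atTop (𝓝 1) := by
  filter_upwards [step_ratio hT hcons hγ, hγ.birkhoff_ne hT] with x h1 h2
  have h0 : ∀ n, 1 ≤ n → birkhoffSum T γ n x ≠ 0 := (h2 0).2
  have hfin0 : ∀ n, birkhoffSum T γ n x ≠ ∞ := (h2 0).1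
  have h : Tendsto (fun n => birkhoffSum T γ (n + m) x / birkhoffSum T γ n x) atTop (𝓝 1) := by
    induction m with
    | zero =>
      refine tendsto_const_nhds.congr' ?_
      filter_upwards [eventually_ge_atTop 1] with n hn
      exact (ENNReal.div_self (h0 n hn) (hfin0 n)).symm
    | succ m ih =>
      have h3 := ENNReal.Tendsto.mul ((tendsto_add_atTop_iff_nat m).2 h1) (Or.inl one_ne_zero) ih
        (Or.inl one_ne_zero)
      rw [one_mul] at h3
      refine h3.congr' ?_
      filter_upwards [eventually_ge_atTop 1] with n hn
      rw [← mul_div_assoc, ENNReal.div_mul_cancel (h0 _ (by omega)) (hfin0 _), add_assoc]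
  have h4 := h.inv
  rw [inv_one] at h4
  refine h4.congr' ?_
  filter_upwards [eventually_ge_atTop 1] with n hn
  exact ENNReal.inv_div (Or.inl (hfin0 _)) (Or.inl (h0 _ hn))

/-- The additive ratio ergodic theorem for `f ≤ K γ`. The upper limits for `f` and for `K γ - f`
add up to at least `K`, while their integrals against `γ` are at most `∫ f` and
`∫ (K γ - f)`; so equality holds throughout. -/
theorem hopf (hT : MeasurePreserving T μ μ) (hcons : IsConservative T μ)
    {γ : X → ℝ≥0∞} (hγ : Weight μ γ) {f : X → ℝ≥0∞} (hf : Measurable f) (K : ℕ)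
    (hfK : ∀ x, f x ≤ K * γ x) :
    (∀ᵐ x ∂μ, Tendsto (fun n => birkhoffSum T f n x / birkhoffSum T γ n x) atTop
      (𝓝 (upper T γ (fun n => birkhoffSum T f n) x))) ∧
    ∫⁻ x, f x ∂μ ≤ ∫⁻ x, upper T γ (fun n => birkhoffSum T f n) x * γ x ∂μ := by
  set f' : X → ℝ≥0∞ := fun x => K * γ x - f x with hf'
  have hf'm : Measurable f' := (hγ.meas.const_mul _).sub hf
  have hadd : ∀ x, f x + f' x = K * γ x := fun x => add_tsub_cancel_of_le (hfK x)
  set U := upper T γ (fun n => birkhoffSum T f n) with hU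
  set U' := upper T γ (fun n => birkhoffSum T f' n) with hU'
  have hUm : Measurable U :=
    measurable_upper hT.measurable hγ.meas (measurable_birkhoffSum hT.measurable hf)
  have hU'm : Measurable U' :=
    measurable_upper hT.measurable hγ.meas (measurable_birkhoffSum hT.measurable hf'm)
  have hKtop : (K : ℝ≥0∞) ≠ ∞ := by simp
  have hliminf : ∀ᵐ x ∂μ,
      liminf (fun n => birkhoffSum T f n x / birkhoffSum T γ n x) atTop = K - U' x := by
    filter_upwards [hγ.birkhoff_ne hT] with x h
    rw [hU', upper, ← ENNReal.liminf_const_sub _ _ hKtop]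
    refine liminf_congr ?_
    filter_upwards [eventually_ge_atTop 1] with n hn
    have h0 : birkhoffSum T γ n x ≠ 0 := (h 0).2 n hn
    have hfin0 : birkhoffSum T γ n x ≠ ∞ := (h 0).1 n
    have hsum : birkhoffSum T f n x / birkhoffSum T γ n x
        + birkhoffSum T f' n x / birkhoffSum T γ n x = K := by
      rw [← ENNReal.add_div]
      have : birkhoffSum T f n x + birkhoffSum T f' n x = K * birkhoffSum T γ n x := by
        simp only [birkhoffSum, ← Finset.sum_add_distrib, hadd, Finset.mul_sum]
      rw [this, mul_div_assoc, ENNReal.div_self h0 hfin0, mul_one]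
    refine ENNReal.eq_sub_of_add_eq ?_ hsum
    exact ((le_add_self.trans_eq hsum).trans_lt hKtop.lt_top).ne
  have hge : ∀ᵐ x ∂μ, (K : ℝ≥0∞) ≤ U x + U' x := by
    filter_upwards [hliminf] with x h
    rw [← tsub_le_iff_right, ← h]
    exact liminf_le_limsup
  have h1 : ∫⁻ x, U x * γ x ∂μ ≤ ∫⁻ x, f x ∂μ :=
    lintegral_upper_birkhoffSum_le hT hcons hγ hf
  have h2 : ∫⁻ x, U' x * γ x ∂μ ≤ ∫⁻ x, f' x ∂μ :=
    lintegral_upper_birkhoffSum_le hT hcons hγ hf'm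
  have htot : ∫⁻ x, f x ∂μ + ∫⁻ x, f' x ∂μ = ∫⁻ x, K * γ x ∂μ := by
    rw [← lintegral_add_left hf]
    simp_rw [hadd]
  have hKfin : ∫⁻ x, K * γ x ∂μ ≠ ∞ := by
    rw [lintegral_const_mul _ hγ.meas]
    exact ENNReal.mul_ne_top hKtop hγ.int
  have hUU : ∫⁻ x, (U x + U' x) * γ x ∂μ = ∫⁻ x, U x * γ x ∂μ + ∫⁻ x, U' x * γ x ∂μ := by
    simp_rw [add_mul]
    exact lintegral_add_left (hUm.mul hγ.meas) _
  have hle : ∀ᵐ x ∂μ, K * γ x ≤ (U x + U' x) * γ x := by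
    filter_upwards [hge] with x hx
    gcongr
  have hge' : ∫⁻ x, K * γ x ∂μ ≤ ∫⁻ x, (U x + U' x) * γ x ∂μ := lintegral_mono_ae hle
  refine ⟨?_, ?_⟩
  · have heq := ae_eq_of_ae_le_of_lintegral_le hle hKfin
      ((hUm.add hU'm).mul hγ.meas).aemeasurable
      (by rw [hUU, ← htot]; exact add_le_add h1 h2)
    filter_upwards [heq, hliminf, hγ.pos, hγ.fin] with x h3 h4 h5 h6
    have hK : (K : ℝ≥0∞) = U x + U' x := (ENNReal.mul_left_inj h5 h6).1 h3
    refine tendsto_of_le_liminf_of_limsup_le ?_ le_rfl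
    rw [h4, hK]
    refine (ENNReal.add_sub_cancel_right ?_).ge
    exact ((le_add_self.trans_eq hK.symm).trans_lt hKtop.lt_top).ne
  · rw [hUU, ← htot] at hge'
    have hfin : ∫⁻ x, f' x ∂μ ≠ ∞ :=
      ((le_add_self.trans_eq htot).trans_lt hKfin.lt_top).ne
    exact (ENNReal.add_le_add_iff_right hfin).1 (hge'.trans (add_le_add_right h2 _))

/-! ### The lower bound by averaging -/

/-- Telescoping: passing from `n` to `n + 1`, the sum `∑_{i<m} α_{n+i}` gains
`α_{n+m} - α_n ≥ α_m ∘ T^n`. -/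
theorem birkhoffSum_le_sum {Y : Type*} {T : Y → Y} {α : ℕ → Y → ℝ≥0∞} {x : Y}
    (hs : ∀ n m, α n x + α m (T^[n] x) ≤ α (n + m) x) (k n : ℕ) :
    birkhoffSum T (α (k + 1)) n x ≤ ∑ i ∈ Finset.range (k + 1), α (n + i) x := by
  induction n with
  | zero => simp
  | succ n ih =>
    rw [birkhoffSum_succ, Finset.sum_range_succ]
    rw [Finset.sum_range_succ'] at ih
    calc birkhoffSum T (α (k + 1)) n x + α (k + 1) (T^[n] x)
        ≤ (∑ i ∈ Finset.range k, α (n + (i + 1)) x + α (n + 0) x) + α (k + 1) (T^[n] x) := by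
          gcongr
      _ = ∑ i ∈ Finset.range k, α (n + (i + 1)) x + (α n x + α (k + 1) (T^[n] x)) := by
          rw [add_assoc, add_zero]
      _ ≤ ∑ i ∈ Finset.range k, α (n + (i + 1)) x + α (n + (k + 1)) x := by
          gcongr
          exact hs n (k + 1)
      _ = _ := by
          simp only [add_assoc, add_comm 1]

theorem birkhoffSum_le_mul {Y : Type*} {T : Y → Y} {α : ℕ → Y → ℝ≥0∞} {x : Y}
    (hs : ∀ n m, α n x + α m (T^[n] x) ≤ α (n + m) x) (k n : ℕ) :
    birkhoffSum T (α (k + 1)) n x ≤ ((k + 1 : ℕ) : ℝ≥0∞) * α (n + (k + 1)) x := by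
  refine (birkhoffSum_le_sum hs k n).trans ?_
  have : ∀ i ∈ Finset.range (k + 1), α (n + i) x ≤ α (n + (k + 1)) x := by
    intro i hi
    rw [Finset.mem_range] at hi
    obtain ⟨q, hq⟩ := Nat.exists_eq_add_of_le (show n + i ≤ n + (k + 1) by omega)
    rw [hq]
    exact le_self_add.trans (hs _ _)
  refine (Finset.sum_le_sum this).trans ?_
  simp

/-- `α_{k+1} / (k+1)` truncated at `K γ`. -/
noncomputable def trunc (γ : X → ℝ≥0∞) (α : ℕ → X → ℝ≥0∞) (k K : ℕ) (x : X) : ℝ≥0∞ :=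
  min (α (k + 1) x / ((k + 1 : ℕ) : ℝ≥0∞)) (K * γ x)

theorem measurable_trunc {γ : X → ℝ≥0∞} (hγ : Measurable γ) {α : ℕ → X → ℝ≥0∞}
    (hα : ∀ n, Measurable (α n)) (k K : ℕ) : Measurable (trunc γ α k K) :=
  ((hα _).div_const _).min (hγ.const_mul _)

/-- An invariant lower bound for `liminf α_n / S_n γ`: the supremum of the additive ratio limits of
the truncations of `α_m / m`. -/
noncomputable def lowerBd (T : X → X) (γ : X → ℝ≥0∞) (α : ℕ → X → ℝ≥0∞) (x : X) : ℝ≥0∞ :=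
  ⨆ p : ℕ × ℕ, upper T γ (fun n => birkhoffSum T (trunc γ α p.1 p.2) n) x

theorem measurable_lowerBd (hT : Measurable T) {γ : X → ℝ≥0∞} (hγ : Measurable γ)
    {α : ℕ → X → ℝ≥0∞} (hα : ∀ n, Measurable (α n)) : Measurable (lowerBd T γ α) :=
  Measurable.iSup fun p => measurable_upper hT hγ
    (measurable_birkhoffSum hT (measurable_trunc hγ hα p.1 p.2))

theorem lowerBd_invariant (hT : MeasurePreserving T μ μ) (hcons : IsConservative T μ)
    {γ : X → ℝ≥0∞} (hγ : Weight μ γ) {α : ℕ → X → ℝ≥0∞} (hα : ∀ n, Measurable (α n)) :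
    ∀ᵐ x ∂μ, lowerBd T γ α (T x) = lowerBd T γ α x := by
  have := fun p : ℕ × ℕ => upper_invariant hT hcons hγ
    (measurable_birkhoffSum hT.measurable (measurable_trunc hγ.meas hα p.1 p.2))
    (superadd_birkhoffSum _)
  filter_upwards [ae_all_iff.2 this] with x hx
  unfold lowerBd
  exact iSup_congr hx

/-- By `birkhoffSum_le_mul`, `α_{n+m} ≥ S_n (α_m / m)`; `steps_ratio` absorbs the index shift by
`m` in the denominator. -/
theorem lowerBd_le_liminf (hT : MeasurePreserving T μ μ) (hcons : IsConservative T μ)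
    {γ : X → ℝ≥0∞} (hγ : Weight μ γ) {α : ℕ → X → ℝ≥0∞} (hα : ∀ n, Measurable (α n))
    (hs : Superadd T μ α) :
    ∀ᵐ x ∂μ, lowerBd T γ α x ≤ liminf (fun n => α n x / birkhoffSum T γ n x) atTop := by
  have h1 := fun p : ℕ × ℕ => (hopf hT hcons hγ (measurable_trunc hγ.meas hα p.1 p.2) p.2
    (fun x => min_le_right _ _)).1
  have h2 := fun m : ℕ => steps_ratio hT hcons hγ m
  filter_upwards [ae_all_iff.2 h1, ae_all_iff.2 h2, hγ.birkhoff_ne hT, hs.orbit hT]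
    with x h1 h2 h3 h4
  refine iSup_le ?_
  rintro ⟨k, K⟩
  have h0 : ∀ n, 1 ≤ n → birkhoffSum T γ n x ≠ 0 := (h3 0).2
  have hfin0 : ∀ n, birkhoffSum T γ n x ≠ ∞ := (h3 0).1
  have ht := ENNReal.Tendsto.mul (h1 (k, K)) (Or.inr ENNReal.one_ne_top) (h2 (k + 1))
    (Or.inl one_ne_zero)
  rw [mul_one] at ht
  rw [← ht.liminf_eq, ← liminf_nat_add (fun n => α n x / birkhoffSum T γ n x) (k + 1)]
  refine liminf_le_liminf ?_
  filter_upwards [eventually_ge_atTop 1] with n hn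
  rw [← mul_div_assoc, ENNReal.div_mul_cancel (h0 n hn) (hfin0 n)]
  gcongr
  have h5 := birkhoffSum_le_mul (T := T) (fun n m => h4 0 n m) k n
  have h6 : birkhoffSum T (α (k + 1)) n x / ((k + 1 : ℕ) : ℝ≥0∞) ≤ α (n + (k + 1)) x := by
    rw [ENNReal.div_le_iff (by simp) (by simp), mul_comm]
    exact h5
  refine le_trans ?_ h6
  simp only [birkhoffSum, div_eq_mul_inv, Finset.sum_mul]
  refine Finset.sum_le_sum fun i _ => ?_
  exact (min_le_left _ _).trans (le_of_eq (div_eq_mul_inv _ _))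

/-- The lower half: `sup_n (1/n) ∫ α_n ≤ ∫ (lowerBd) γ`. -/
theorem rate_le_lintegral_lowerBd (hT : MeasurePreserving T μ μ) (hcons : IsConservative T μ)
    {γ : X → ℝ≥0∞} (hγ : Weight μ γ) {α : ℕ → X → ℝ≥0∞} (hα : ∀ n, Measurable (α n)) :
    rate μ α ≤ ∫⁻ x, lowerBd T γ α x * γ x ∂μ := by
  refine iSup_le fun k => ?_
  have hmono : Monotone fun K => trunc γ α k K := by
    intro K K' h x
    dsimp only [trunc]
    gcongr
  calc (∫⁻ x, α (k + 1) x ∂μ) / ((k + 1 : ℕ) : ℝ≥0∞)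
      = ∫⁻ x, α (k + 1) x / ((k + 1 : ℕ) : ℝ≥0∞) ∂μ := by
        simp_rw [div_eq_mul_inv]
        rw [lintegral_mul_const _ (hα _)]
    _ = ∫⁻ x, ⨆ K : ℕ, trunc γ α k K x ∂μ := by
        refine lintegral_congr_ae ?_
        filter_upwards [hγ.pos] with x hx
        simp only [trunc]
        rw [← inf_iSup_eq, ← ENNReal.iSup_mul, ENNReal.iSup_natCast, ENNReal.top_mul hx, inf_top_eq]
    _ = ⨆ K : ℕ, ∫⁻ x, trunc γ α k K x ∂μ :=
        lintegral_iSup (fun K => measurable_trunc hγ.meas hα k K) hmono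
    _ ≤ _ := by
        refine iSup_le fun K => ?_
        refine (hopf hT hcons hγ (measurable_trunc hγ.meas hα k K) K
          (fun x => min_le_right _ _)).2.trans ?_
        refine lintegral_mono fun x => mul_le_mul_left ?_ _
        exact le_iSup (fun p : ℕ × ℕ =>
          upper T γ (fun n => birkhoffSum T (trunc γ α p.1 p.2) n) x) (k, K)

/-! ### Convergence and the limit formula -/

theorem lowerBd_eq_upper (hT : MeasurePreserving T μ μ) (hcons : IsConservative T μ)
    {γ : X → ℝ≥0∞} (hγ : Weight μ γ) {α : ℕ → X → ℝ≥0∞} (hα : ∀ n, Measurable (α n))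
    (hs : Superadd T μ α) : ∀ᵐ x ∂μ, lowerBd T γ α x = upper T γ α x := by
  have hLm := measurable_lowerBd hT.measurable hγ.meas hα
  have hUm := measurable_upper hT.measurable hγ.meas hα
  have hle : ∀ᵐ x ∂μ, lowerBd T γ α x ≤ upper T γ α x := by
    filter_upwards [lowerBd_le_liminf hT hcons hγ hα hs] with x hx
    exact hx.trans liminf_le_limsup
  -- On `{lowerBd ≤ c}` both halves apply and the integral is finite.
  have hc : ∀ c : ℕ, ∀ᵐ x ∂μ, lowerBd T γ α x ≤ c → lowerBd T γ α x = upper T γ α x := by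
    intro c
    set A : Set X := {x | lowerBd T γ α x ≤ c} with hA
    have hAm : MeasurableSet A := measurableSet_le hLm measurable_const
    have hAinv : T ⁻¹' A =ᵐ[μ] A := by
      filter_upwards [lowerBd_invariant hT hcons hγ hα] with x hx
      change (lowerBd T γ α (T x) ≤ c) = (lowerBd T γ α x ≤ c)
      rw [hx]
    have hTA := mp_restrict hT hAm hAinv
    have hcA := conservative_restrict hcons hAm
    have hγA := hγ.restrict A
    have h1 := lintegral_upper_le_rate hTA hγ.meas hα (hs.restrict A)
      (upper_invariant hTA hcA hγA hα (hs.restrict A))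
    have h2 := rate_le_lintegral_lowerBd hTA hcA hγA hα
    have h3 : ∫⁻ x in A, lowerBd T γ α x * γ x ∂μ ≠ ∞ := by
      have : ∫⁻ x in A, lowerBd T γ α x * γ x ∂μ ≤ ∫⁻ x in A, c * γ x ∂μ := by
        refine setLIntegral_mono' hAm fun x hx => mul_le_mul_left hx _
      rw [lintegral_const_mul _ hγ.meas] at this
      exact (this.trans_lt (ENNReal.mul_lt_top (by simp) hγA.int.lt_top)).ne
    have heq := ae_eq_of_ae_le_of_lintegral_le (μ := μ.restrict A)
      (f := fun x => lowerBd T γ α x * γ x) (g := fun x => upper T γ α x * γ x)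
      (by
        filter_upwards [ae_restrict_of_ae hle] with x hx
        exact mul_le_mul_left hx _)
      h3 (hUm.mul hγ.meas).aemeasurable (h1.trans h2)
    have heq' := (ae_restrict_iff' hAm).1 heq
    filter_upwards [heq', hγ.pos, hγ.fin] with x h4 h5 h6 h7
    exact (ENNReal.mul_left_inj h5 h6).1 (h4 h7)
  filter_upwards [ae_all_iff.2 hc, hle] with x h1 h2
  by_cases h : lowerBd T γ α x = ∞
  · exact le_antisymm h2 (by rw [h]; exact le_top)
  · obtain ⟨c, hc⟩ := ENNReal.exists_nat_gt h
    exact h1 c hc.le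

theorem tendsto_upper (hT : MeasurePreserving T μ μ) (hcons : IsConservative T μ)
    {γ : X → ℝ≥0∞} (hγ : Weight μ γ) {α : ℕ → X → ℝ≥0∞} (hα : ∀ n, Measurable (α n))
    (hs : Superadd T μ α) :
    ∀ᵐ x ∂μ, Tendsto (fun n => α n x / birkhoffSum T γ n x) atTop (𝓝 (upper T γ α x)) := by
  filter_upwards [lowerBd_eq_upper hT hcons hγ hα hs, lowerBd_le_liminf hT hcons hγ hα hs]
    with x h1 h2
  rw [h1] at h2
  exact tendsto_of_le_liminf_of_limsup_le h2 le_rfl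

theorem rate_eq_lintegral_upper (hT : MeasurePreserving T μ μ) (hcons : IsConservative T μ)
    {γ : X → ℝ≥0∞} (hγ : Weight μ γ) {α : ℕ → X → ℝ≥0∞} (hα : ∀ n, Measurable (α n))
    (hs : Superadd T μ α) : rate μ α = ∫⁻ x, upper T γ α x * γ x ∂μ := by
  refine le_antisymm ((rate_le_lintegral_lowerBd hT hcons hγ hα).trans_eq ?_)
    (lintegral_upper_le_rate hT hγ.meas hα hs (upper_invariant hT hcons hγ hα hs))
  refine lintegral_congr_ae ?_
  filter_upwards [lowerBd_eq_upper hT hcons hγ hα hs] with x hx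
  rw [hx]

/-- Fekete's lemma for the integrals `∫ α_n`. -/
theorem tendsto_rate (hT : MeasurePreserving T μ μ) {α : ℕ → X → ℝ≥0∞}
    (hα : ∀ n, Measurable (α n)) (hs : Superadd T μ α) :
    Tendsto (fun n : ℕ => (∫⁻ x, α n x ∂μ) / (n : ℝ≥0∞)) atTop (𝓝 (rate μ α)) := by
  refine tendsto_of_le_liminf_of_limsup_le ?_ ?_
  · refine iSup_le fun k => ?_
    set b := (∫⁻ x, α (k + 1) x ∂μ) / ((k + 1 : ℕ) : ℝ≥0∞) with hb
    have hstep : ∀ n : ℕ, (n : ℝ≥0∞) * b ≤ ∫⁻ x, α (n + (k + 1)) x ∂μ := by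
      intro n
      rw [hb, ← mul_div_assoc, ENNReal.div_le_iff (by simp) (by simp),
        ← lintegral_birkhoffSum hT (hα _), mul_comm, ← lintegral_const_mul _ (hα _)]
      refine lintegral_mono_ae ?_
      filter_upwards [hs.orbit hT] with x hx
      exact birkhoffSum_le_mul (fun n m => hx 0 n m) k n
    have h1 : Tendsto (fun n : ℕ => 1 + ((k + 1 : ℕ) : ℝ≥0∞) * (n : ℝ≥0∞)⁻¹) atTop
        (𝓝 (1 + ((k + 1 : ℕ) : ℝ≥0∞) * 0)) :=
      tendsto_const_nhds.add (ENNReal.Tendsto.const_mul ENNReal.tendsto_inv_nat_nhds_zero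
        (Or.inr (by simp)))
    have h2 : Tendsto (fun n : ℕ => (n : ℝ≥0∞) / ((n + (k + 1) : ℕ) : ℝ≥0∞)) atTop (𝓝 1) := by
      rw [mul_zero, add_zero] at h1
      have h3 := h1.inv
      rw [inv_one] at h3
      refine h3.congr' ?_
      filter_upwards [eventually_ge_atTop 1] with n hn
      have hn0 : (n : ℝ≥0∞) ≠ 0 := by simp; omega
      rw [← ENNReal.inv_div (Or.inl (by simp)) (Or.inl hn0)]
      congr 1
      rw [Nat.cast_add n (k + 1), ENNReal.add_div, ENNReal.div_self hn0 (by simp), div_eq_mul_inv]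
    have h4 := ENNReal.Tendsto.mul_const (b := b) h2 (Or.inl one_ne_zero)
    rw [one_mul] at h4
    rw [← h4.liminf_eq,
      ← liminf_nat_add (fun n : ℕ => (∫⁻ x, α n x ∂μ) / (n : ℝ≥0∞)) (k + 1)]
    refine liminf_le_liminf (Eventually.of_forall fun n => ?_)
    rw [ENNReal.mul_div_right_comm.symm]
    gcongr
    exact hstep n
  · refine limsup_le_of_le (by isBoundedDefault) ?_
    filter_upwards [eventually_ge_atTop 1] with n hn
    rw [ENNReal.div_le_iff (by simp; omega) (by simp), mul_comm]
    exact lintegral_le_rate α hn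

theorem erealToENNReal_coe (u : ℝ≥0∞) : erealToENNReal (u : EReal) = u := by
  unfold erealToENNReal
  split_ifs with h
  · exact (EReal.coe_ennreal_eq_top_iff.1 h).symm
  · rw [EReal.toReal_coe_ennreal, ENNReal.ofReal_toReal]
    exact fun h' => h (by rw [h', EReal.coe_ennreal_top])

end SuperRatio

/-- Ratio ergodic theorem for nonnegative superadditive sequences: `aₙ / Sₙg` converges
a.e. to some `h` with values in `[0, +∞]`, and for every invariant set `A`,
`sup_{n≥1} (1/n)∫_A aₙ = lim (1/n)∫_A aₙ = ∫_A h·g` in `[0, +∞]`. -/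
theorem superadditive_ratio_ergodic {X : Type*} [MeasurableSpace X] (μ : Measure X)
    [SigmaFinite μ] (T : X → X) (hT : MeasurePreserving T μ μ) (hcons : IsConservative T μ)
    (a : ℕ → X → ℝ) (hmeas : ∀ n, Measurable (a n))
    (hsuper : ∀ n ≥ 1, ∀ m ≥ 1, ∀ᵐ x ∂μ, a n x + a m (T^[n] x) ≤ a (n + m) x)
    (ha1 : ∀ᵐ x ∂μ, 0 ≤ a 1 x)
    (g : X → ℝ) (hg : Integrable g μ) (hgpos : ∀ᵐ x ∂μ, 0 < g x) :
    ∃ h : X → EReal,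
      (∀ᵐ x ∂μ, 0 ≤ h x) ∧
      (∀ᵐ x ∂μ,
        Tendsto (fun n => ((a n x / birkhoff T g n x : ℝ) : EReal)) atTop (𝓝 (h x))) ∧
      ∀ A : Set X, MeasurableSet A → T ⁻¹' A = A →
        (⨆ n : ℕ, (∫⁻ x in A, ENNReal.ofReal (a (n + 1) x) ∂μ) / (((n : ℕ) + 1 : ℕ) : ENNReal))
            = ∫⁻ x in A, erealToENNReal (h x) * ENNReal.ofReal (g x) ∂μ ∧
        Tendsto (fun n : ℕ => (∫⁻ x in A, ENNReal.ofReal (a n x) ∂μ) / (n : ENNReal)) atTop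
            (𝓝 (∫⁻ x in A, erealToENNReal (h x) * ENNReal.ofReal (g x) ∂μ)) := by
  have ha : ∀ n ≥ 1, ∀ᵐ x ∂μ, 0 ≤ a n x := by
    intro n hn
    induction n, hn using Nat.le_induction with
    | base => exact ha1
    | succ n hn ih =>
      filter_upwards [ih, hsuper n hn 1 le_rfl, SuperRatio.ae_orbit hT ha1] with x h1 h2 h3
      linarith [h3 n]
  -- A measurable representative of `g`.
  set g' : X → ℝ := hg.aestronglyMeasurable.mk g with hg'
  have hg'm : Measurable g' := hg.aestronglyMeasurable.stronglyMeasurable_mk.measurable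
  have hgg' : g =ᵐ[μ] g' := hg.aestronglyMeasurable.ae_eq_mk
  set γ : X → ENNReal := fun x => ENNReal.ofReal (g' x) with hγdef
  have hγ : SuperRatio.Weight μ γ :=
    { meas := hg'm.ennreal_ofReal
      pos := by
        filter_upwards [hgpos, hgg'] with x h1 h2
        rw [h2] at h1
        exact (ENNReal.ofReal_pos.2 h1).ne'
      fin := ae_of_all _ fun x => ENNReal.ofReal_ne_top
      int := (hg.congr hgg').lintegral_lt_top.ne }
  -- The value at `n = 0` is reset to `0`, as `a 0` is unconstrained.
  set α : ℕ → X → ENNReal := fun n x => if n = 0 then 0 else ENNReal.ofReal (a n x) with hαdef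
  have hαm : ∀ n, Measurable (α n) := by
    intro n
    by_cases hn : n = 0
    · simp [hαdef, hn]
    · simpa [hαdef, hn] using (hmeas n).ennreal_ofReal
  have hα1 : ∀ n, 1 ≤ n → ∀ x, α n x = ENNReal.ofReal (a n x) := by
    intro n hn x
    simp [hαdef, show n ≠ 0 by omega]
  have hs : SuperRatio.Superadd T μ α := by
    intro n m
    rcases Nat.eq_zero_or_pos n with rfl | hn
    · exact ae_of_all _ fun x => by simp [hαdef]
    rcases Nat.eq_zero_or_pos m with rfl | hm
    · exact ae_of_all _ fun x => by simp [hαdef]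
    filter_upwards [hsuper n hn m hm, ha n hn, SuperRatio.ae_orbit hT (ha m hm)] with x h1 h2 h3
    rw [hα1 n hn, hα1 m hm, hα1 (n + m) (by omega), ← ENNReal.ofReal_add h2 (h3 n)]
    exact ENNReal.ofReal_le_ofReal h1
  refine ⟨fun x => (SuperRatio.upper T γ α x : EReal),
    ae_of_all _ fun x => EReal.coe_ennreal_nonneg _, ?_, ?_⟩
  · have ha' : ∀ᵐ x ∂μ, ∀ n, 1 ≤ n → 0 ≤ a n x :=
      ae_all_iff.2 fun n => eventually_imp_distrib_left.2 (ha n)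
    filter_upwards [SuperRatio.tendsto_upper hT hcons hγ hαm hs, ha',
      SuperRatio.ae_orbit hT hgg', SuperRatio.ae_orbit hT hgpos] with x h1 h2 h3 h4
    refine ((continuous_coe_ennreal_ereal.tendsto _).comp h1).congr' ?_
    filter_upwards [eventually_ge_atTop 1] with n hn
    have hpos : 0 < birkhoff T g n x :=
      Finset.sum_pos (fun k _ => h4 k) (Finset.nonempty_range_iff.2 (by omega))
    have hS : birkhoffSum T γ n x = ENNReal.ofReal (birkhoff T g n x) := by
      unfold birkhoff birkhoffSum
      rw [ENNReal.ofReal_sum_of_nonneg fun k _ => (h4 k).le]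
      exact Finset.sum_congr rfl fun k _ => by rw [h3 k]
    simp only [Function.comp]
    rw [hα1 n hn, hS, ← ENNReal.ofReal_div_of_pos hpos, EReal.coe_ennreal_ofReal,
      max_eq_left (div_nonneg (h2 n hn) hpos.le)]
  · intro A hA hTA
    have hTr := SuperRatio.mp_restrict hT hA (Filter.EventuallyEq.of_eq hTA)
    have hcr := SuperRatio.conservative_restrict hcons hA
    have hI : ∫⁻ x in A, erealToENNReal (SuperRatio.upper T γ α x : EReal) * ENNReal.ofReal (g x) ∂μ
        = SuperRatio.rate (μ.restrict A) α := by
      rw [SuperRatio.rate_eq_lintegral_upper hTr hcr (hγ.restrict A) hαm (hs.restrict A)]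
      refine lintegral_congr_ae ?_
      filter_upwards [ae_restrict_of_ae hgg'] with x hx
      rw [SuperRatio.erealToENNReal_coe, hx]
    rw [hI]
    refine ⟨?_, ?_⟩
    · simp only [SuperRatio.rate, hα1 _ (Nat.le_add_left 1 _)]
    · refine (SuperRatio.tendsto_rate hTr hαm (hs.restrict A)).congr' ?_
      filter_upwards [eventually_ge_atTop 1] with n hn
      simp only [hα1 n hn]
end
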